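/- arXiv:1912.10968 — 2 statements merged into one kernel-verified Lean document; each statement's English description precedes it below -/
import Mathlib

section
/- Let f : R → R' be a homomorphism of commutative rings such that R' is finitely presented as an R-algebra, and suppose f is a v-cover: for every valuation ring V and every ring homomorphism R → V there exist a valuation ring V', an injective local ring homomorphism V → V', and a ring homomorphism R' → V' making the square R → R', R → V → V' commute. Then f is a universal descent morphism. -/
open CategoryTheory CategoryTheory.Pretriangulated

universe u

instance restrictScalarsAdditive {R S : Type u} [CommRing R] [CommRing S] (f : R →+* S) :
    (ModuleCat.restrictScalars.{u} f).Additive where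
  map_add := rfl

/-- `f : R →+* S` is a universal descent morphism if the smallest strictly full triangulated
subcategory of `D(R)` closed under direct summands and containing all restrictions of scalars
of objects of `D(S)` is all of `D(R)`. -/
def IsUniversalDescent {R S : Type u} [CommRing R] [CommRing S] (f : R →+* S) : Prop :=
  letI := HasDerivedCategory.standard (ModuleCat.{u} R)
  ∀ P : DerivedCategory (ModuleCat.{u} R) → Prop,
    (∀ X Y : DerivedCategory (ModuleCat.{u} R), (X ≅ Y) → P X → P Y) →
    (∀ X, P X → P (X⟦(1 : ℤ)⟧)) →
    (∀ X, P X → P (X⟦(-1 : ℤ)⟧)) →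
    (∀ T : Triangle (DerivedCategory (ModuleCat.{u} R)),
      (T ∈ distTriang (DerivedCategory (ModuleCat.{u} R))) →
      P T.obj₁ → P T.obj₂ → P T.obj₃) →
    (∀ (X Y : DerivedCategory (ModuleCat.{u} R)) (i : X ⟶ Y) (r : Y ⟶ X),
      i ≫ r = 𝟙 X → P Y → P X) →
    (∀ K : CochainComplex (ModuleCat.{u} S) ℤ,
      P (DerivedCategory.Q.obj
        (((ModuleCat.restrictScalars.{u} f).mapHomologicalComplex (ComplexShape.up ℤ)).obj K))) →
    ∀ X, P X

/-! Call a class of complexes of modules thick if it has two-out-of-three in short exact sequences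
and is closed under retracts; it suffices that restrictions of complexes along `R → S` generate all
complexes as a thick class. This can be tested after adjoining a root of a monic polynomial (the
structure map splits), on the two charts `R[y / x]` and `R[x / y]` of a blow-up (by a Čech argument
on the projective line), and on the closed subschemes `x = 0` and `𝔟 = 0` if `x 𝔟 = 0`. Iterating
the first two, and using the third for an Oka-type argument, a failure of descent persists to a
quotient of an extension of `R` that is an absolutely integrally closed valuation ring `V`.

Over such a `V`, the hypothesis gives a torsion-free quotient domain `A` of `V ⊗ S` with nonempty
special fibre. Noether normalization of the special fibre makes `A` quasi-finite over `V[x₁, …,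
xₙ]` near a point `𝔮` of that fibre, so by Zariski's main theorem `A` is there a localization of a
domain `T` integral over `V[x₁, …, xₙ]` at some `g ∉ 𝔮`. As `V` has an infinite residue field and
is absolutely integrally closed, some map `V[x₁, …, xₙ] → V` extends to `T` with `g` going to a
unit. This gives a retraction of `V → A`, so the base change of `R → S` to `V` trivially descends, a
contradiction. -/

namespace UniversalDescent

open Limits Polynomial

section Thick

universe v w

variable {𝒜 : Type w} [Category.{v} 𝒜] [Abelian 𝒜]

/-- A property of objects of an abelian category is thick if it satisfies the two-out-of-three
property in short exact sequences and passes to direct summands. On complexes these are the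
properties that descend to thick triangulated subcategories of the derived category. -/
class IsThick (P : ObjectProperty 𝒜) : Prop
    extends P.IsStableUnderRetracts, P.IsClosedUnderExtensions where
  prop_X₁_of_shortExact {S : ShortComplex 𝒜} (hS : S.ShortExact) : P S.X₂ → P S.X₃ → P S.X₁
  prop_X₃_of_shortExact {S : ShortComplex 𝒜} (hS : S.ShortExact) : P S.X₁ → P S.X₂ → P S.X₃

instance IsThick.inverseImage {ℬ : Type*} [Category* ℬ] [Abelian ℬ] (P : ObjectProperty 𝒜)
    [IsThick P] (F : ℬ ⥤ 𝒜) [F.PreservesZeroMorphisms] [PreservesFiniteLimits F]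
    [PreservesFiniteColimits F] : IsThick (P.inverseImage F) where
  of_retract h := P.prop_of_retract (h.map F)
  prop_X₂_of_shortExact hS := P.prop_X₂_of_shortExact (hS.map_of_exact F)
  prop_X₁_of_shortExact hS := IsThick.prop_X₁_of_shortExact (P := P) (hS.map_of_exact F)
  prop_X₃_of_shortExact hS := IsThick.prop_X₃_of_shortExact (P := P) (hS.map_of_exact F)

lemma shortExact_image_ι_factorThruImage {S : ShortComplex 𝒜} (hS : S.Exact) :
    (ShortComplex.mk (Abelian.image.ι S.f) (Abelian.factorThruImage S.g) (by
      simp [← cancel_mono (Abelian.image.ι S.g),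
        ← cancel_epi (Abelian.factorThruImage S.f)])).ShortExact where
  exact := ShortComplex.exact_of_f_is_kernel _
    (isKernelOfComp (Abelian.image.ι S.g) S.g hS.isLimitImage _ (Abelian.image.fac _))
  mono_f := by dsimp; infer_instance
  epi_g := by dsimp; infer_instance

variable (P : ObjectProperty 𝒜) [IsThick P]

lemma prop_image_of_mono {X Y : 𝒜} (f : X ⟶ Y) [Mono f] (h : P X) : P (Abelian.image f) :=
  P.prop_of_iso (asIso (Abelian.factorThruImage f)) h

lemma prop_image_of_epi {X Y : 𝒜} (f : X ⟶ Y) [Epi f] (h : P Y) : P (Abelian.image f) :=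
  P.prop_of_iso (asIso (Abelian.image.ι f)).symm h

lemma prop_kernel_of_prop_comp {X Y Z : 𝒜} (w : X ⟶ Y) (d : Y ⟶ Z) [Epi d]
    (h₁ : P (kernel w)) (h₂ : P (cokernel w)) (h₃ : P (kernel (w ≫ d)))
    (h₄ : P (cokernel (w ≫ d))) : P (kernel d) := by
  have E := kernelCokernelCompSequence_exact w d
  have : Epi (cokernel.map w (w ≫ d) (𝟙 _) d (by simp)) :=
    epi_of_epi_fac (f := cokernel.π w) (h := d ≫ cokernel.π (w ≫ d)) (cokernel.π_desc _ _ _)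
  have hα : P (Abelian.image (kernel.map (w ≫ d) d w (𝟙 _) (by simp))) :=
    IsThick.prop_X₃_of_shortExact (shortExact_image_ι_factorThruImage (E.exact 0))
      (prop_image_of_mono P (kernel.map w (w ≫ d) (𝟙 _) d (by simp)) h₁) h₃
  have hδ : P (Abelian.image (kernelCokernelCompSequence.δ w d)) :=
    IsThick.prop_X₁_of_shortExact (shortExact_image_ι_factorThruImage (E.exact 2)) h₂
      (prop_image_of_epi P (cokernel.map w (w ≫ d) (𝟙 _) d _) h₄)
  exact P.prop_X₂_of_shortExact (shortExact_image_ι_factorThruImage (E.exact 1)) hα hδ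

lemma prop_kernel_biprod_map {X Y X' Y' : 𝒜} (a : X ⟶ X') (b : Y ⟶ Y')
    (ha : P (kernel a)) (hb : P (kernel b)) : P (kernel (biprod.map a b)) :=
  P.prop_of_retract
    { i := biprod.lift
        (kernel.map (biprod.map a b) a biprod.fst biprod.fst (by simp))
        (kernel.map (biprod.map a b) b biprod.snd biprod.snd (by simp))
      r := kernel.lift _ (biprod.map (kernel.ι a) (kernel.ι b)) (by ext <;> simp)
      retract := by ext <;> simp } (P.prop_biprod ha hb)

lemma prop_cokernel_biprod_map {X Y X' Y' : 𝒜} (a : X ⟶ X') (b : Y ⟶ Y')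
    (ha : P (cokernel a)) (hb : P (cokernel b)) : P (cokernel (biprod.map a b)) :=
  P.prop_of_retract
    { i := cokernel.desc _ (biprod.map (cokernel.π a) (cokernel.π b)) (by ext <;> simp)
      r := biprod.desc
        (cokernel.map a (biprod.map a b) biprod.inl biprod.inl (by simp))
        (cokernel.map b (biprod.map a b) biprod.inr biprod.inr (by simp))
      retract := by ext <;> simp } (P.prop_biprod ha hb)

variable {R : Type*} [CommRing R] [Linear R 𝒜]

lemma exists_smul_eq_smul_id_kernel (f g : R) {N : 𝒜} {T w : N ⟶ N} (hw : w = f • T - g • 𝟙 N) :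
    ∃ T' : kernel w ⟶ kernel w, f • T' = g • 𝟙 _ := by
  have hcomm : T ≫ w = w ≫ T := by simp [hw, Preadditive.comp_sub, Preadditive.sub_comp]
  have hι : kernel.ι w ≫ (f • T - g • 𝟙 N) = 0 := hw ▸ kernel.condition w
  refine ⟨kernel.map w w T T hcomm.symm, ?_⟩
  simpa [← cancel_mono (kernel.ι w), Preadditive.comp_sub, sub_eq_zero] using hι

lemma exists_smul_eq_smul_id_cokernel (f g : R) {N : 𝒜} {T w : N ⟶ N}
    (hw : w = f • T - g • 𝟙 N) : ∃ T' : cokernel w ⟶ cokernel w, f • T' = g • 𝟙 _ := by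
  have hcomm : T ≫ w = w ≫ T := by simp [hw, Preadditive.comp_sub, Preadditive.sub_comp]
  have hπ : (f • T - g • 𝟙 N) ≫ cokernel.π w = 0 := hw ▸ cokernel.condition w
  refine ⟨cokernel.map w w T T hcomm.symm, ?_⟩
  simpa [← cancel_epi (cokernel.π w), Preadditive.sub_comp, sub_eq_zero] using hπ

lemma prop_of_forall_smul_id_eq_zero (x : R) (𝔟 : Ideal R) (hx : ∀ b ∈ 𝔟, x * b = 0)
    (h₁ : ∀ N : 𝒜, x • 𝟙 N = 0 → P N) (h₂ : ∀ N : 𝒜, (∀ b ∈ 𝔟, b • 𝟙 N = 0) → P N) (X : 𝒜) :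
    P X := by
  refine P.prop_X₂_of_shortExact (shortExact_image_ι_factorThruImage
    (ShortComplex.exact_of_f_is_kernel (.mk _ _ (kernel.condition (x • 𝟙 X)))
      (kernelIsKernel _))) (prop_image_of_mono P _ (h₁ _ ?_)) (h₂ _ fun b hb ↦ ?_)
  · simpa [← cancel_mono (kernel.ι (x • 𝟙 X))] using kernel.condition (x • 𝟙 X)
  · simp [← cancel_epi (Abelian.factorThruImage (x • 𝟙 X)),
      ← cancel_mono (Abelian.image.ι (x • 𝟙 X)), smul_smul, mul_comm b x, hx b hb]

/- Think of `E` as `X[t] = X[t⁻¹]`, with `s` the shift and `t` undoing it. Then `d` is the Čech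
differential `X[t] ⊞ X[t⁻¹] ⟶ X[t, t⁻¹]` of the projective line over `X`, whose kernel contains
`X` as a summand, and `w` is multiplication by the section `f t - g` of `𝒪(1)`, whose kernel and
cokernel on each term are supported on the zero locus of the section. -/
lemma prop_of_shift_of_forall_smul_eq_smul_id {f g : R}
    (hfg : ∀ (N : 𝒜) (T : N ⟶ N), f • T = g • 𝟙 N → P N)
    (hgf : ∀ (N : 𝒜) (T : N ⟶ N), g • T = f • 𝟙 N → P N) {X E : 𝒜} {i : X ⟶ E} {e : E ⟶ X}
    {s t : E ⟶ E} (hst : s ≫ t = 𝟙 E) (hie : i ≫ e = 𝟙 X) (hit : i ≫ t = 0) (hse : s ≫ e = 0) :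
    P X := by
  let d : E ⊞ E ⟶ E ⊞ E :=
    biprod.desc biprod.inl (-(e ≫ i ≫ biprod.inl) - t ≫ biprod.inr)
  let T : E ⊞ E ⟶ E ⊞ E :=
    biprod.desc (s ≫ biprod.inl) (e ≫ i ≫ biprod.inl + t ≫ biprod.inr)
  let w : E ⊞ E ⟶ E ⊞ E := biprod.map (f • s - g • 𝟙 E) (g • s - f • 𝟙 E)
  have hw : w ≫ d = f • T - g • 𝟙 _ := by
    ext <;> simp [w, d, T, Preadditive.sub_comp, reassoc_of% hse, hst]
  have : IsSplitEpi d := ⟨⟨biprod.desc biprod.inl (-(s ≫ biprod.inr)), by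
    ext <;> simp [d, reassoc_of% hse, hst]⟩⟩
  obtain ⟨_, h₁⟩ := exists_smul_eq_smul_id_kernel f g (T := s) rfl
  obtain ⟨_, h₂⟩ := exists_smul_eq_smul_id_cokernel f g (T := s) rfl
  obtain ⟨_, h₃⟩ := exists_smul_eq_smul_id_kernel g f (T := s) rfl
  obtain ⟨_, h₄⟩ := exists_smul_eq_smul_id_cokernel g f (T := s) rfl
  obtain ⟨_, h₅⟩ := exists_smul_eq_smul_id_kernel f g hw
  obtain ⟨_, h₆⟩ := exists_smul_eq_smul_id_cokernel f g hw
  have hker : P (kernel d) := prop_kernel_of_prop_comp P w d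
    (prop_kernel_biprod_map P _ _ (hfg _ _ h₁) (hgf _ _ h₃))
    (prop_cokernel_biprod_map P _ _ (hfg _ _ h₂) (hgf _ _ h₄)) (hfg _ _ h₅) (hfg _ _ h₆)
  exact P.prop_of_retract
    { i := kernel.lift d (biprod.lift i i) (by ext <;> simp [d, hit, reassoc_of% hie])
      r := kernel.ι d ≫ biprod.snd ≫ e } hker

lemma prop_of_forall_smul_eq_smul_id [HasProductsOfShape ℕ 𝒜] (f g : R)
    (hfg : ∀ (N : 𝒜) (T : N ⟶ N), f • T = g • 𝟙 N → P N)
    (hgf : ∀ (N : 𝒜) (T : N ⟶ N), g • T = f • 𝟙 N → P N) (X : 𝒜) : P X := by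
  let E : 𝒜 := ∏ᶜ fun _ : ℕ ↦ X
  let i : X ⟶ E := Pi.lift fun n ↦ if n = 0 then 𝟙 X else 0
  let e : E ⟶ X := Pi.π _ 0
  let s : E ⟶ E := Pi.lift fun n ↦ Nat.casesOn n 0 fun n ↦ Pi.π _ n
  let t : E ⟶ E := Pi.lift fun n ↦ Pi.π _ (n + 1)
  have hst : s ≫ t = 𝟙 E := by
    refine Pi.hom_ext _ _ fun n ↦ ?_
    simp [s, t]
  have hit : i ≫ t = 0 := by
    refine Pi.hom_ext _ _ fun n ↦ ?_
    simp [i, t]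
  exact prop_of_shift_of_forall_smul_eq_smul_id P hfg hgf hst
    (by simp [i, e] : i ≫ e = 𝟙 X) hit (by simp [s, e])

end Thick

section Descent

variable {R S T : Type u} [CommRing R] [CommRing S] [CommRing T]

/-- Restriction of scalars along `f`, on unbounded cochain complexes of modules. -/
noncomputable abbrev restrict (f : R →+* S) :
    CochainComplex (ModuleCat.{u} S) ℤ ⥤ CochainComplex (ModuleCat.{u} R) ℤ :=
  (ModuleCat.restrictScalars.{u} f).mapHomologicalComplex (ComplexShape.up ℤ)

/-- Restriction of scalars along a composition is the composition of restrictions. -/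
noncomputable def restrictComp (f : R →+* S) (g : S →+* T) :
    restrict (g.comp f) ≅ restrict g ⋙ restrict f :=
  NatIso.mapHomologicalComplex (ModuleCat.restrictScalarsComp f g) _

/-- `f` descends if the restrictions of complexes along `f` generate all complexes as a thick
class. -/
def Descends (f : R →+* S) : Prop :=
  ∀ (P : ObjectProperty (CochainComplex (ModuleCat.{u} R) ℤ)) [IsThick P],
    (∀ K, P ((restrict f).obj K)) → ∀ K, P K

/-- `a` and `b` jointly descend if the restrictions of complexes along `a` and along `b` together
generate all complexes as a thick class. -/
def JointlyDescend (a : R →+* S) (b : R →+* T) : Prop :=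
  ∀ (P : ObjectProperty (CochainComplex (ModuleCat.{u} R) ℤ)) [IsThick P],
    (∀ K, P ((restrict a).obj K)) → (∀ K, P ((restrict b).obj K)) → ∀ K, P K

lemma Descends.jointlyDescend_self {f : R →+* S} (hf : Descends f) : JointlyDescend f f :=
  fun P _ h _ ↦ hf P h

theorem Descends.isUniversalDescent {f : R →+* S} (hf : Descends f) : IsUniversalDescent f := by
  let := HasDerivedCategory.standard (ModuleCat.{u} R)
  intro P hiso _ hshift hcone hretract hres X
  let Q := DerivedCategory.Q (C := ModuleCat.{u} R)
  have : IsThick fun K ↦ P (Q.obj K) :=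
    { of_retract := fun h ↦ hretract _ _ _ _ (h.map Q).retract
      prop_X₁_of_shortExact := fun hS h₂ h₃ ↦
        hiso _ _ ((shiftEquiv _ (1 : ℤ)).unitIso.app _).symm (hshift _ (hcone _
          (rot_of_distTriang _ (DerivedCategory.triangleOfSES_distinguished hS)) h₂ h₃))
      prop_X₂_of_shortExact := fun hS h₁ h₃ ↦
        hcone _ (inv_rot_of_distTriang _ (DerivedCategory.triangleOfSES_distinguished hS))
          (hshift _ h₃) h₁
      prop_X₃_of_shortExact := fun hS ↦
        hcone _ (DerivedCategory.triangleOfSES_distinguished hS) }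
  exact hiso _ _ (Q.objObjPreimageIso X) (hf (fun K ↦ P (Q.obj K)) hres _)

lemma exists_restrict_iso_of_comp_eq_algebraMap {f : R →+* S}
    {K : CochainComplex (ModuleCat.{u} R) ℤ} (φ : S →+* End K)
    (hφ : φ.comp f = algebraMap R (End K)) : ∃ K', Nonempty ((restrict f).obj K' ≅ K) := by
  let ρ (i : ℤ) : S →+* Module.End R (K.X i) :=
    { toFun := fun s ↦ ((φ s : K ⟶ K).f i).hom
      map_one' := by rw [map_one]; rfl
      map_mul' := fun _ _ ↦ by rw [map_mul]; rfl
      map_zero' := by rw [map_zero]; rfl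
      map_add' := fun _ _ ↦ by rw [map_add]; rfl }
  have hρ (i : ℤ) (r : R) (x : K.X i) : ρ i (f r) x = r • x := by
    change ((φ.comp f r : K ⟶ K).f i).hom x = r • x
    rw [hφ]
    rfl
  let (i : ℤ) : Module S (K.X i) := Module.compHom (K.X i) (ρ i)
  let K' : CochainComplex (ModuleCat.{u} S) ℤ :=
    { X := fun i ↦ ModuleCat.of S (K.X i)
      d := fun i j ↦ ModuleCat.ofHom
        { (K.d i j).hom.toAddHom with
          map_smul' := fun s x ↦ ConcreteCategory.congr_hom ((φ s : K ⟶ K).comm i j) x }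
      shape := fun i j h ↦ by
        ext x
        exact ConcreteCategory.congr_hom (K.shape i j h) x
      d_comp_d' := fun i j k _ _ ↦ by
        ext x
        exact ConcreteCategory.congr_hom (K.d_comp_d i j k) x }
  let e (i : ℤ) : ((restrict f).obj K').X i ≅ K.X i :=
    (AddEquiv.toLinearEquiv (M := (ModuleCat.restrictScalars f).obj (K'.X i)) (M₂ := K.X i)
      (AddEquiv.refl (K.X i)) (hρ i)).toModuleIso
  exact ⟨K', ⟨HomologicalComplex.Hom.isoOfComponents e fun _ _ _ ↦ rfl⟩⟩

lemma prop_of_comp_eq_algebraMap (P : ObjectProperty (CochainComplex (ModuleCat.{u} R) ℤ))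
    [IsThick P] {f : R →+* S} (hf : ∀ K, P ((restrict f).obj K))
    {K : CochainComplex (ModuleCat.{u} R) ℤ} (φ : S →+* End K)
    (hφ : φ.comp f = algebraMap R (End K)) : P K := by
  obtain ⟨K', ⟨e⟩⟩ := exists_restrict_iso_of_comp_eq_algebraMap φ hφ
  exact P.prop_of_iso e (hf K')

lemma Descends.id : Descends (RingHom.id R) := fun P _ h K ↦
  prop_of_comp_eq_algebraMap P h (algebraMap R (End K)) (RingHom.comp_id _)

lemma Descends.of_addMonoidHom (f : R →+* S) (l : S →+ R) (hl : ∀ r s, l (f r * s) = r * l s)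
    (hl₁ : l 1 = 1) : Descends f := by
  let := Module.compHom S f
  let L : S →ₗ[R] R := { l with map_smul' := hl }
  let q (M : ModuleCat.{u} R) : TensorProduct R S M →ₗ[R] M :=
    (TensorProduct.lid R M).toLinearMap ∘ₗ L.rTensor M
  let ρ : ModuleCat.extendScalars f ⋙ ModuleCat.restrictScalars f ⟶ 𝟭 (ModuleCat.{u} R) :=
    { app := fun M ↦ ModuleCat.ofHom
        (X := (ModuleCat.extendScalars f ⋙ ModuleCat.restrictScalars f).obj M) (q M)
      naturality := fun M N φ ↦ ModuleCat.hom_ext (TensorProduct.ext'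
        (M := S) (N := M) (P₂ := N) fun s x ↦ (map_smul φ.hom (L s) x).symm) }
  exact fun P _ hP K ↦ P.prop_of_retract
    { i := (NatTrans.mapHomologicalComplex (ModuleCat.extendRestrictScalarsAdj f).unit _).app K
      r := (NatTrans.mapHomologicalComplex ρ _).app K
      retract := by
        ext n x
        change L 1 • x = x
        rw [show L 1 = 1 from hl₁, one_smul] }
    (hP (((ModuleCat.extendScalars f).mapHomologicalComplex _).obj K))

lemma descends_adjoinRoot_of {p : R[X]} (hp : p.Monic) (hdeg : p.natDegree ≠ 0) :
    Descends (AdjoinRoot.of p) := by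
  rcases subsingleton_or_nontrivial R with hR | hR
  · exact .of_addMonoidHom _ 0 (fun _ _ ↦ Subsingleton.elim _ _) (Subsingleton.elim _ _)
  refine .of_addMonoidHom _ ((lcoeff R 0) ∘ₗ AdjoinRoot.modByMonicHom hp).toAddMonoidHom
    (fun r s ↦ ?_) ?_
  · rw [← AdjoinRoot.algebraMap_eq, ← Algebra.smul_def]
    simp
  · have : (1 : R[X]) %ₘ p = 1 := (modByMonic_eq_self_iff hp).2 (by
      rw [degree_one]; exact natDegree_pos_iff_degree_pos.1 (Nat.pos_of_ne_zero hdeg))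
    simp [← map_one (AdjoinRoot.mk p), AdjoinRoot.modByMonicHom_mk, this, -map_one]

lemma prop_of_forall_mem_smul_id_eq_zero
    (P : ObjectProperty (CochainComplex (ModuleCat.{u} R) ℤ)) [IsThick P] {I : Ideal R}
    (hI : ∀ K, P ((restrict (Ideal.Quotient.mk I)).obj K))
    {K : CochainComplex (ModuleCat.{u} R) ℤ} (hK : ∀ x ∈ I, x • 𝟙 K = 0) : P K :=
  prop_of_comp_eq_algebraMap P hI (Ideal.Quotient.lift I (algebraMap R (End K)) fun x hx ↦
    (Algebra.algebraMap_eq_smul_one x).trans (hK x hx)) (Ideal.Quotient.lift_comp_mk ..)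

lemma jointlyDescend_mk_of_mul_eq_zero {x : R} {𝔟 : Ideal R} (h : ∀ b ∈ 𝔟, x * b = 0) :
    JointlyDescend (Ideal.Quotient.mk (Ideal.span {x})) (Ideal.Quotient.mk 𝔟) := by
  intro P _ hx h𝔟
  refine prop_of_forall_smul_id_eq_zero P x 𝔟 h (fun N hN ↦ ?_) fun N ↦
    prop_of_forall_mem_smul_id_eq_zero P h𝔟
  refine prop_of_forall_mem_smul_id_eq_zero P hx fun z hz ↦ ?_
  obtain ⟨c, rfl⟩ := Ideal.mem_span_singleton'.1 hz
  rw [mul_smul, hN, smul_zero]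

/-- The chart `R[t] / (x t - y)` of the blow-up of the ideal `(x, y)`, in which `t = y / x`. -/
abbrev BlowupChart (x y : R) : Type u := R[X] ⧸ Ideal.span {C x * X - C y}

/-- The structure map of a chart of a blow-up. -/
noncomputable abbrev BlowupChart.of (x y : R) : R →+* BlowupChart x y :=
  (Ideal.Quotient.mk _).comp C

lemma jointlyDescend_blowupChart_of (x y : R) :
    JointlyDescend (BlowupChart.of x y) (BlowupChart.of y x) := by
  have key (P : ObjectProperty (CochainComplex (ModuleCat.{u} R) ℤ)) [IsThick P] (x y : R)
      (h : ∀ K, P ((restrict (BlowupChart.of x y)).obj K)) (N) (T : N ⟶ N)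
      (hT : x • T = y • 𝟙 N) : P N := by
    have hker : Ideal.span {C x * X - C y} ≤ RingHom.ker (aeval (R := R) (A := End N) T) := by
      rw [Ideal.span_singleton_le_iff_mem, RingHom.mem_ker, map_sub, map_mul, aeval_C, aeval_C,
        aeval_X, ← Algebra.smul_def, sub_eq_zero, Algebra.algebraMap_eq_smul_one]
      exact hT
    exact prop_of_comp_eq_algebraMap P h
      (Ideal.Quotient.lift _ (aeval (A := End N) T).toRingHom hker) (RingHom.ext fun r ↦ by simp)
  exact fun P _ h₁ h₂ ↦ prop_of_forall_smul_eq_smul_id P x y (key P x y h₁) (key P y x h₂)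

/-- The base change of `f : R →+* S` along `g : R →+* C` descends, in a form that does not mention
`S ⊗[R] C`: restrictions along all maps out of `C` that factor through this tensor product
generate all complexes over `C` as a thick class. -/
def DescendsAlong (f : R →+* S) {C : Type u} [CommRing C] (g : R →+* C) : Prop :=
  ∀ (P : ObjectProperty (CochainComplex (ModuleCat.{u} C) ℤ)) [IsThick P],
    (∀ (T : Type u) [CommRing T] (a : C →+* T) (b : S →+* T), a.comp g = b.comp f →
      ∀ K, P ((restrict a).obj K)) → ∀ K, P K

namespace DescendsAlong

variable {f : R →+* S} {A B C : Type u} [CommRing A] [CommRing B] [CommRing C] {g : R →+* C}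

lemma descends (h : DescendsAlong f (RingHom.id R)) : Descends f := fun P _ hP ↦
  h P fun _ _ a b hab K ↦ by
    obtain rfl : a = b.comp f := by rw [← hab, RingHom.comp_id]
    exact P.prop_of_iso ((restrictComp f b).app K).symm (hP _)

lemma of_comp_eq {b : S →+* C} (h : b.comp f = g) : DescendsAlong f g := fun P _ hP ↦
  Descends.id P (hP C (RingHom.id C) b (by rw [h, RingHom.id_comp]))

lemma of_subsingleton [Subsingleton C] : DescendsAlong f g :=
  of_comp_eq (b :=
    { toFun := 0
      map_one' := Subsingleton.elim _ _
      map_mul' := fun _ _ ↦ Subsingleton.elim _ _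
      map_zero' := rfl
      map_add' := fun _ _ ↦ Subsingleton.elim _ _ }) (RingHom.ext fun _ ↦ Subsingleton.elim _ _)

lemma prop_restrict {a : C →+* A} (h : DescendsAlong f (a.comp g))
    (P : ObjectProperty (CochainComplex (ModuleCat.{u} C) ℤ)) [IsThick P]
    (hP : ∀ (T : Type u) [CommRing T] (a : C →+* T) (b : S →+* T), a.comp g = b.comp f →
      ∀ K, P ((restrict a).obj K)) (K) : P ((restrict a).obj K) :=
  h (P.inverseImage (restrict a)) (fun T _ c b hcb K ↦
    P.prop_of_iso ((restrictComp a c).app K) (hP T _ b (by rw [RingHom.comp_assoc, hcb]) K)) K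

lemma of_jointlyDescend {a : C →+* A} {b : C →+* B} (hab : JointlyDescend a b)
    (ha : DescendsAlong f (a.comp g)) (hb : DescendsAlong f (b.comp g)) : DescendsAlong f g :=
  fun P _ hP ↦ hab P (ha.prop_restrict P hP) (hb.prop_restrict P hP)

end DescendsAlong

end Descent

section FormalTerm

/-- Formal expressions with coefficients in `R`, closed under sums, products, the choice of one of
the two quotients of two expressions, and the choice of a root `root n a` of the monic polynomial
`X ^ (n + 1) + ∑ i, a i * X ^ i`. An interpretation of all of them in an extension of `R` that is a
domain makes their values an absolutely integrally closed valuation ring. -/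
inductive FormalTerm (R : Type u) : Type u
  | const (r : R)
  | add (x y : FormalTerm R)
  | mul (x y : FormalTerm R)
  | quot (x y : FormalTerm R)
  | root (n : ℕ) (a : Fin (n + 1) → FormalTerm R)

variable {R S C C' : Type u} [CommRing R] [CommRing S] [CommRing C] [CommRing C']

namespace FormalTerm

/-- The height of an expression. -/
def height : FormalTerm R → ℕ
  | const _ => 0
  | add x y => max x.height y.height + 1
  | mul x y => max x.height y.height + 1
  | quot x y => max x.height y.height + 1
  | root _ a => (Finset.univ.sup fun i ↦ (a i).height) + 1

/-- The polynomial of which the value of an expression has to be a root, given values `v` for its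
subexpressions. For `quot x y` the root is `v y / v x` or `v x / v y`. -/
noncomputable def poly (g : R →+* C) (v : FormalTerm R → C) : FormalTerm R → C[X]
  | const r => X - Polynomial.C (g r)
  | add x y => X - Polynomial.C (v x + v y)
  | mul x y => X - Polynomial.C (v x * v y)
  | quot x y => (Polynomial.C (v x) * X - Polynomial.C (v y)) *
      (Polynomial.C (v y) * X - Polynomial.C (v x))
  | root n a => X ^ (n + 1) + ∑ i : Fin (n + 1), Polynomial.C (v (a i)) * X ^ (i : ℕ)

lemma poly_congr (g : R →+* C) {v w : FormalTerm R → C} {t : FormalTerm R}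
    (h : ∀ s, s.height < t.height → v s = w s) : t.poly g v = t.poly g w := by
  cases t with
  | const r => rfl
  | add x y | mul x y | quot x y =>
    rw [poly, poly, h x (Nat.lt_succ_of_le (le_max_left ..)),
      h y (Nat.lt_succ_of_le (le_max_right ..))]
  | root n a =>
    have ha (i) : v (a i) = w (a i) := h _ (Nat.lt_succ_of_le
      (Finset.le_sup (f := fun i ↦ (a i).height) (Finset.mem_univ i)))
    simp only [poly, ha]

lemma map_poly (φ : C →+* C') (g : R →+* C) (v : FormalTerm R → C) (t : FormalTerm R) :
    (t.poly g v).map φ = t.poly (φ.comp g) (φ ∘ v) := by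
  cases t <;> simp [poly, Polynomial.map_sum]

lemma monic_poly_root (g : R →+* C) (v : FormalTerm R → C) (n : ℕ)
    (a : Fin (n + 1) → FormalTerm R) : ((root n a).poly g v).Monic :=
  monic_X_pow_add (degree_sum_fin_lt fun i ↦ v (a i))

lemma natDegree_poly_root [Nontrivial C] (g : R →+* C) (v : FormalTerm R → C) (n : ℕ)
    (a : Fin (n + 1) → FormalTerm R) : ((root n a).poly g v).natDegree = n + 1 := by
  rw [poly, natDegree_add_eq_left_of_degree_lt, natDegree_X_pow]
  rw [degree_X_pow]
  exact degree_sum_fin_lt fun i ↦ v (a i)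

lemma exists_monic_or_exists_eq_quot [Nontrivial C] (g : R →+* C) (v : FormalTerm R → C)
    (t : FormalTerm R) :
    (t.poly g v).Monic ∧ (t.poly g v).natDegree ≠ 0 ∨ ∃ x y, t = quot x y := by
  cases t with
  | const r | add x y | mul x y =>
    exact .inl ⟨monic_X_sub_C _, by rw [poly, natDegree_X_sub_C]; exact one_ne_zero⟩
  | quot x y => exact .inr ⟨x, y, rfl⟩
  | root n a => exact .inl ⟨monic_poly_root .., by simp [natDegree_poly_root]⟩

lemma isRoot_poly_update [DecidableEq (FormalTerm R)] {g : R →+* C} {v : FormalTerm R → C}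
    {D : Finset (FormalTerm R)} {t : FormalTerm R} (htD : t ∉ D)
    (hmax : ∀ s ∈ D, s.height ≤ t.height) (hv : ∀ s ∈ D, (s.poly g v).IsRoot (v s))
    (φ : C →+* C') {z : C'} (hz : ((t.poly g v).map φ).IsRoot z) :
    ∀ s ∈ insert t D, (s.poly (φ.comp g) (Function.update (φ ∘ v) t z)).IsRoot
      (Function.update (φ ∘ v) t z s) := by
  have hpoly (s : FormalTerm R) (hs : s.height ≤ t.height) :
      s.poly (φ.comp g) (Function.update (φ ∘ v) t z) = (s.poly g v).map φ := by
    rw [map_poly]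
    exact poly_congr _ fun r hr ↦ Function.update_of_ne (by rintro rfl; omega) _ _
  intro s hs
  obtain rfl | hs := Finset.mem_insert.1 hs
  · rwa [hpoly s le_rfl, Function.update_self]
  · rw [hpoly s (hmax s hs), Function.update_of_ne (ne_of_mem_of_not_mem hs htD)]
    exact (hv s hs).map

end FormalTerm

open FormalTerm

variable {f : R →+* S}

lemma descendsAlong_of_forall_isRoot_poly_map {g : R →+* C} {v : FormalTerm R → C}
    {t : FormalTerm R} (h : ∀ (C' : Type u) [CommRing C'] (φ : C →+* C') (z : C'),
      ((t.poly g v).map φ).IsRoot z → DescendsAlong f (φ.comp g)) : DescendsAlong f g := by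
  rcases subsingleton_or_nontrivial C with hC | hC
  · exact .of_subsingleton
  obtain ⟨hmonic, hdeg⟩ | ⟨x, y, rfl⟩ := t.exists_monic_or_exists_eq_quot g v
  · have := h _ (AdjoinRoot.of _) _ (AdjoinRoot.isRoot_root _)
    exact .of_jointlyDescend (descends_adjoinRoot_of hmonic hdeg).jointlyDescend_self this this
  · have hroot (a b : C) : (Ideal.Quotient.mk (Ideal.span {Polynomial.C a * X - Polynomial.C b}))
        (Polynomial.C a * X - Polynomial.C b) = 0 := Ideal.Quotient.mk_singleton_self _
    simp only [map_sub, map_mul] at hroot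
    refine .of_jointlyDescend (jointlyDescend_blowupChart_of (v x) (v y))
      (h _ _ (Ideal.Quotient.mk _ X) ?_) (h _ _ (Ideal.Quotient.mk _ X) ?_)
    · simp [poly, hroot]
    · simp [poly, hroot]

theorem descends_of_descendsAlong_of_isRoot_poly (D : Finset (FormalTerm R))
    (h : ∀ (C : Type u) [CommRing C] (g : R →+* C) (v : FormalTerm R → C),
      (∀ t ∈ D, (t.poly g v).IsRoot (v t)) → DescendsAlong f g) : Descends f := by
  classical
  revert h
  refine Finset.induction_on_max_value height D (fun h ↦ ?_) fun t D htD hmax ih h ↦ ?_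
  · exact (h R (RingHom.id R) 0 (by simp)).descends
  · exact ih fun C _ g v hv ↦ descendsAlong_of_forall_isRoot_poly_map fun C' _ φ z hz ↦
      h C' _ _ (isRoot_poly_update htD hmax hv φ hz)

end FormalTerm

section Limit

variable {R S A : Type u} [CommRing R] [CommRing S] [CommRing A]

lemma exists_fg_le_and_le_sup {I J K : Ideal A} (hJ : J.FG) (h : J ≤ I ⊔ K) :
    ∃ I₀ ≤ I, I₀.FG ∧ J ≤ I₀ ⊔ K := by
  obtain ⟨s, rfl⟩ := hJ
  choose y hyI z hzK hyz using fun x : s ↦ Submodule.mem_sup.1 (h (Ideal.subset_span x.2))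
  refine ⟨Ideal.span (Set.range y), Ideal.span_le.2 (Set.range_subset_iff.2 hyI),
    Submodule.fg_span (Set.finite_range y), Ideal.span_le.2 fun x hx ↦ ?_⟩
  exact Submodule.mem_sup.2 ⟨_, Ideal.subset_span ⟨⟨x, hx⟩, rfl⟩, _, hzK ⟨x, hx⟩, hyz ⟨x, hx⟩⟩

/-- The base change of `f` to `A ⧸ I` descends already at a finite stage `A ⧸ I₀` of the
presentation of `A ⧸ I` as a filtered colimit. -/
def DescendsNear (f : R →+* S) (g : R →+* A) (I : Ideal A) : Prop :=
  ∃ I₀ ≤ I, I₀.FG ∧ ∀ (C : Type u) [CommRing C] (φ : A →+* C), I₀ ≤ RingHom.ker φ →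
    DescendsAlong f (φ.comp g)

variable {f : R →+* S} {g : R →+* A}

lemma isOka_descendsNear : Ideal.IsOka (DescendsNear f g) where
  top := ⟨⊤, le_rfl, Ideal.fg_top A, fun C _ φ hφ ↦ by
    have : Subsingleton C := subsingleton_of_zero_eq_one
      (((map_one φ).symm.trans (hφ (Submodule.mem_top (x := 1)))).symm)
    exact .of_subsingleton⟩
  oka := by
    rintro I a ⟨J, hJI, hJ, hJφ⟩ ⟨L, hLI, hL, hLφ⟩
    obtain ⟨I₁, hI₁, hI₁fg, hJI₁⟩ := exists_fg_le_and_le_sup hJ hJI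
    refine ⟨I₁ ⊔ Ideal.span {a} * L, sup_le hI₁ (Ideal.mul_le.2 fun r hr s hs ↦ ?_),
      Submodule.FG.sup hI₁fg ((Submodule.fg_span_singleton a).mul hL), fun C _ φ hφ ↦ ?_⟩
    · obtain ⟨c, rfl⟩ := Ideal.mem_span_singleton'.1 hr
      rw [mul_assoc, mul_comm a]
      exact I.mul_mem_left c (Ideal.mem_colon_span_singleton.1 (hLI hs))
    have hprod : ∀ b ∈ L.map φ, φ a * b = 0 := by
      suffices L.map φ ≤ LinearMap.ker (LinearMap.mulLeft C (φ a)) from this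
      exact Ideal.map_le_iff_le_comap.2 fun b hb ↦ (map_mul φ a b).symm.trans
        (hφ (Submodule.mem_sup_right (Ideal.mul_mem_mul (Ideal.mem_span_singleton_self a) hb)))
    refine .of_jointlyDescend (jointlyDescend_mk_of_mul_eq_zero hprod) ?_ ?_
    · rw [← RingHom.comp_assoc]
      refine hJφ _ _ (hJI₁.trans (sup_le ?_ ?_))
      · exact (le_sup_left.trans hφ).trans fun x hx ↦ by simp_all [RingHom.mem_ker]
      · rw [Ideal.span_singleton_le_iff_mem, RingHom.mem_ker]
        exact Ideal.Quotient.mk_singleton_self _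
    · rw [← RingHom.comp_assoc]
      exact hLφ _ _ fun x hx ↦ Ideal.Quotient.eq_zero_iff_mem.2 (Ideal.mem_map_of_mem φ hx)

lemma exists_isPrime_not_descendsNear {I : Ideal A} (hI : ¬ DescendsNear f g I) :
    ∃ 𝔭 : Ideal A, 𝔭.IsPrime ∧ I ≤ 𝔭 ∧ ¬ DescendsNear f g 𝔭 := by
  obtain ⟨𝔭, hI𝔭, h𝔭⟩ := zorn_le_nonempty₀ {J | ¬ DescendsNear f g J} (fun c hc hchain J hJ ↦ by
    refine ⟨sSup c, fun ⟨I₀, hle, hfg, h⟩ ↦ ?_, fun _ ↦ le_sSup⟩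
    obtain ⟨K, hK, hI₀K⟩ := (CompleteLattice.isCompactElement_iff_le_of_directed_sSup_le _ I₀).1
      ((Submodule.fg_iff_compact I₀).1 hfg) c ⟨J, hJ⟩ hchain.directedOn hle
    exact hc hK ⟨I₀, hI₀K, hfg, h⟩) I hI
  exact ⟨𝔭, isOka_descendsNear.isPrime_of_maximal_not h𝔭, hI𝔭, h𝔭.prop⟩

lemma descendsNear_of_comp_eq (hf : f.FinitePresentation) {I : Ideal A} {k : S →+* A ⧸ I}
    (hk : k.comp f = (Ideal.Quotient.mk I).comp g) : DescendsNear f g I := by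
  algebraize [f]
  obtain ⟨n, π, hπ, ⟨G, hG⟩⟩ := (hf : Algebra.FinitePresentation R S)
  choose w hw using fun i ↦ Ideal.Quotient.mk_surjective (k (π (MvPolynomial.X i)))
  let ψ := MvPolynomial.eval₂Hom g w
  have hψ : (Ideal.Quotient.mk I).comp ψ = k.comp π.toRingHom := by
    refine MvPolynomial.ringHom_ext (fun r ↦ ?_) fun i ↦ ?_
    · have := RingHom.congr_fun hk r
      simpa [ψ, ← MvPolynomial.algebraMap_eq, RingHom.algebraMap_toAlgebra] using this.symm
    · simp [ψ, hw]
  refine ⟨(RingHom.ker π).map ψ, Ideal.map_le_iff_le_comap.2 fun x hx ↦ ?_,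
    Ideal.FG.map ⟨G, hG⟩ ψ, fun C _ φ hφ ↦ ?_⟩
  · rw [Ideal.mem_comap, ← Ideal.Quotient.eq_zero_iff_mem, ← RingHom.comp_apply, hψ,
      RingHom.comp_apply]
    exact (congrArg k hx).trans (map_zero k)
  · have hker : RingHom.ker π.toRingHom ≤ RingHom.ker (φ.comp ψ) := fun x hx ↦
      hφ (Ideal.mem_map_of_mem ψ hx)
    refine .of_comp_eq (b := π.toRingHom.liftOfRightInverse _
      (Function.rightInverse_surjInv hπ) ⟨φ.comp ψ, hker⟩) (RingHom.ext fun r ↦ ?_)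
    have := π.toRingHom.liftOfRightInverse_comp_apply _ (Function.rightInverse_surjInv hπ)
      ⟨φ.comp ψ, hker⟩ (MvPolynomial.C r)
    rwa [show π.toRingHom (MvPolynomial.C r) = f r from π.commutes r, RingHom.comp_apply φ,
      show ψ (MvPolynomial.C r) = g r from MvPolynomial.eval₂_C ..] at this

end Limit

section ValuationRing

variable {R S : Type u} [CommRing R] [CommRing S]

/-- A ring is absolutely integrally closed if every nonconstant monic polynomial has a root. -/
def IsAbsolutelyIntegrallyClosed (V : Type*) [CommRing V] : Prop :=
  ∀ p : V[X], p.Monic → p.natDegree ≠ 0 → ∃ z, p.IsRoot z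

namespace FormalTerm

/-- The relations between the variables `X t` of the polynomial ring on all expressions `t` which
express that `X t` is a value of `t`. -/
noncomputable def relations (R : Type u) [CommRing R] :
    FormalTerm R → MvPolynomial (FormalTerm R) R :=
  fun t ↦ (t.poly (MvPolynomial.C (R := R)) MvPolynomial.X).eval (MvPolynomial.X t)

variable {D : Type u} [CommRing D] {φ : MvPolynomial (FormalTerm R) R →+* D}

lemma map_relations_eq_zero_iff {t : FormalTerm R} : φ (relations R t) = 0 ↔
    (t.poly (φ.comp MvPolynomial.C) (φ ∘ MvPolynomial.X)).IsRoot (φ (MvPolynomial.X t)) := by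
  rw [← map_poly, IsRoot.def, eval_map_apply, relations]

lemma exists_map_X_eq (h : ∀ t, φ (relations R t) = 0) (p : MvPolynomial (FormalTerm R) R) :
    ∃ t, φ (MvPolynomial.X t) = φ p := by
  have hroot (t) := map_relations_eq_zero_iff.1 (h t)
  induction p using MvPolynomial.induction_on with
  | C r => exact ⟨const r, by simpa [poly, sub_eq_zero] using hroot (const r)⟩
  | add p q hp hq =>
    obtain ⟨s, hs⟩ := hp
    obtain ⟨t, ht⟩ := hq
    exact ⟨add s t, by simpa [poly, sub_eq_zero, hs, ht] using hroot (add s t)⟩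
  | mul_X p t hp =>
    obtain ⟨s, hs⟩ := hp
    exact ⟨mul s t, by simpa [poly, sub_eq_zero, hs] using hroot (mul s t)⟩

lemma valuationRing_of_map_relations_eq_zero [IsDomain D] (hφ : Function.Surjective φ)
    (h : ∀ t, φ (relations R t) = 0) : ValuationRing D := by
  refine ValuationRing.iff_dvd_total.2 ⟨fun a b ↦ ?_⟩
  obtain ⟨p, rfl⟩ := hφ a
  obtain ⟨q, rfl⟩ := hφ b
  obtain ⟨s, hs⟩ := exists_map_X_eq h p
  obtain ⟨t, ht⟩ := exists_map_X_eq h q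
  have := map_relations_eq_zero_iff.1 (h (quot s t))
  simp only [poly, Function.comp_apply, hs, ht, IsRoot.def, eval_mul, eval_sub, eval_C, eval_X,
    mul_eq_zero, sub_eq_zero] at this
  exact this.imp (fun h ↦ ⟨_, h.symm⟩) fun h ↦ ⟨_, h.symm⟩

lemma isAbsolutelyIntegrallyClosed_of_map_relations_eq_zero (hφ : Function.Surjective φ)
    (h : ∀ t, φ (relations R t) = 0) : IsAbsolutelyIntegrallyClosed D := by
  intro p hp hdeg
  obtain ⟨n, hn⟩ := Nat.exists_eq_succ_of_ne_zero hdeg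
  choose q hq using hφ
  choose t ht using exists_map_X_eq h
  have := map_relations_eq_zero_iff.1 (h (root n fun i ↦ t (q (p.coeff i))))
  refine ⟨_, (congrArg (IsRoot · _) ?_).mp this⟩
  simp only [poly, Function.comp_apply, ht, hq]
  rw [Fin.sum_univ_eq_sum_range (fun i ↦ Polynomial.C (p.coeff i) * X ^ i), ← Nat.succ_eq_add_one,
    ← hn, ← hp.as_sum]

end FormalTerm

open FormalTerm

lemma not_descendsNear_span_relations {f : R →+* S} (hf : ¬ Descends f) :
    ¬ DescendsNear f MvPolynomial.C (Ideal.span (Set.range (relations R))) := by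
  classical
  rintro ⟨_, hle, ⟨s, rfl⟩, h⟩
  obtain ⟨T, hT, hsT⟩ := Submodule.subset_span_finite_of_subset_span (Submodule.span_le.1 hle)
  obtain ⟨D, -, rfl⟩ := Finset.subset_set_image_iff.1 (Set.image_univ ▸ hT)
  refine hf (descends_of_descendsAlong_of_isRoot_poly D fun C _ g v hv ↦ ?_)
  have hφ : (MvPolynomial.eval₂Hom g v).comp MvPolynomial.C = g := by ext; simp
  have hφX : MvPolynomial.eval₂Hom g v ∘ MvPolynomial.X = v := by ext; simp
  rw [← hφ]
  refine h C _ ((Submodule.span_le.2 hsT).trans (Ideal.span_le.2 ?_))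
  rw [Finset.coe_image]
  rintro _ ⟨t, ht, rfl⟩
  refine map_relations_eq_zero_iff.2 ?_
  rw [hφ, hφX]
  simpa using hv t ht

theorem descends_of_forall_valuationRing {f : R →+* S} (hfp : f.FinitePresentation)
    (h : ∀ (V : Type u) [CommRing V] [IsDomain V] [ValuationRing V],
      IsAbsolutelyIntegrallyClosed V → ∀ g : R →+* V, ∃ k : S →+* V, k.comp f = g) :
    Descends f := by
  by_contra hf
  obtain ⟨𝔭, _, hrel, h𝔭⟩ := exists_isPrime_not_descendsNear (not_descendsNear_span_relations hf)
  have hmk (t) : Ideal.Quotient.mk 𝔭 (relations R t) = 0 :=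
    Ideal.Quotient.eq_zero_iff_mem.2 (hrel (Ideal.subset_span ⟨t, rfl⟩))
  have := valuationRing_of_map_relations_eq_zero Ideal.Quotient.mk_surjective hmk
  obtain ⟨k, hk⟩ := h _ (isAbsolutelyIntegrallyClosed_of_map_relations_eq_zero
    Ideal.Quotient.mk_surjective hmk) ((Ideal.Quotient.mk 𝔭).comp MvPolynomial.C)
  exact h𝔭 (descendsNear_of_comp_eq hfp hk)

end ValuationRing

namespace IsAbsolutelyIntegrallyClosed

variable {V : Type*} [CommRing V]

lemma splits (hV : IsAbsolutelyIntegrallyClosed V) {p : V[X]} (hp : p.Monic) : p.Splits := by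
  induction hn : p.natDegree generalizing p with
  | zero => rw [hp.natDegree_eq_zero.1 hn]; exact .one
  | succ n ih =>
    have : Nontrivial V := by
      by_contra hV
      rw [not_nontrivial_iff_subsingleton] at hV
      simp [Subsingleton.elim p 0] at hn
    obtain ⟨z, hz⟩ := hV p hp (by omega)
    obtain ⟨q, rfl⟩ := dvd_iff_isRoot.2 hz
    have hq : q.Monic := (monic_X_sub_C z).of_mul_monic_left hp
    rw [(monic_X_sub_C z).natDegree_mul hq, natDegree_X_sub_C] at hn
    exact (Splits.X_sub_C z).mul (ih hq (by omega))

lemma isAlgClosed_residueField [IsLocalRing V] (hV : IsAbsolutelyIntegrallyClosed V) :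
    IsAlgClosed (IsLocalRing.ResidueField V) := by
  refine .of_exists_root _ fun p hp hirr ↦ ?_
  obtain ⟨q, rfl, hdeg, hq⟩ := lifts_and_natDegree_eq_and_monic
    (map_surjective _ (IsLocalRing.residue_surjective (R := V)) p) hp
  obtain ⟨z, hz⟩ := hV q hq (hdeg ▸ hirr.natDegree_pos.ne')
  exact ⟨_, hz.map⟩

lemma exists_isUnit_isRoot [IsDomain V] [IsLocalRing V] (hV : IsAbsolutelyIntegrallyClosed V)
    {p : V[X]} (hp : p.Monic) {i : ℕ} (hi : i < p.natDegree) (hpi : IsUnit (p.coeff i)) :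
    ∃ z, IsUnit z ∧ p.IsRoot z := by
  by_contra! h
  have hroots : ∀ z ∈ p.roots, IsLocalRing.residue V z = 0 := fun z hz ↦
    (IsLocalRing.residue_eq_zero_iff z).2 fun hu ↦ h z hu (isRoot_of_mem_roots hz)
  have hmap : p.map (IsLocalRing.residue V) = X ^ p.natDegree := by
    rw [(hV.splits hp).natDegree_eq_card_roots]
    conv_lhs => rw [(hV.splits hp).eq_prod_roots_of_monic hp]
    have hX : ∀ z ∈ p.roots, (X - C z).map (IsLocalRing.residue V) = X := fun z hz ↦ by
      simp [hroots z hz]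
    rw [Polynomial.map_multiset_prod, Multiset.map_map, Function.comp_def,
      Multiset.map_congr rfl hX, Multiset.map_const', Multiset.prod_replicate]
  have hcoeff := congr_arg (coeff · i) hmap
  simp only [coeff_map, coeff_X_pow, hi.ne, if_false] at hcoeff
  exact (hpi.map (IsLocalRing.residue V)).ne_zero hcoeff

lemma surjective_of_isIntegral [IsDomain V] (hV : IsAbsolutelyIntegrallyClosed V) {T : Type*}
    [CommRing T] [IsDomain T] {j : V →+* T} (hj : j.IsIntegral) : Function.Surjective j := by
  intro z
  obtain ⟨p, hp, hz⟩ := hj z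
  rw [(hV.splits hp).eq_prod_roots_of_monic hp, eval₂_multiset_prod, Multiset.map_map,
    Multiset.prod_eq_zero_iff, Multiset.mem_map] at hz
  obtain ⟨r, -, hr⟩ := hz
  exact ⟨r, (sub_eq_zero.1 (by simpa using hr)).symm⟩

lemma exists_ringHom_comp_eq [IsDomain V] (hV : IsAbsolutelyIntegrallyClosed V) {B T : Type*}
    [CommRing B] [CommRing T] {j : B →+* T} (hj : j.IsIntegral) {ψ : B →+* V}
    (hψ : Function.Surjective ψ) (hker : RingHom.ker j ≤ RingHom.ker ψ) :
    ∃ χ : T →+* V, χ.comp j = ψ := by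
  algebraize [j]
  have := RingHom.ker_isPrime ψ
  obtain ⟨Q, -, hQ, hQψ⟩ := Ideal.exists_ideal_over_prime_of_isIntegral (RingHom.ker ψ)
    (⊥ : Ideal T) hker
  let q := (Ideal.Quotient.mk Q).comp j
  have hq : RingHom.ker q = RingHom.ker ψ := by
    rw [← hQψ, ← RingHom.comap_ker, Ideal.mk_ker]; rfl
  let ι : V →+* T ⧸ Q := ψ.liftOfSurjective hψ ⟨q, hq.ge⟩
  have hι (b : B) : ι (ψ b) = q b := ψ.liftOfRightInverse_comp_apply _ _ ⟨q, hq.ge⟩ b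
  have hιq : ι.comp ψ = q := RingHom.ext hι
  have hinj : Function.Injective ι := by
    rw [injective_iff_map_eq_zero]
    intro v hv
    obtain ⟨b, rfl⟩ := hψ v
    rwa [hι, ← RingHom.mem_ker, hq] at hv
  have hint : ι.IsIntegral := .tower_top ψ ι <|
    hιq ▸ hj.trans _ _ (RingHom.isIntegral_of_surjective _ Ideal.Quotient.mk_surjective)
  let e : V ≃+* T ⧸ Q := .ofBijective ι ⟨hinj, hV.surjective_of_isIntegral hint⟩
  exact ⟨(e.symm : T ⧸ Q →+* V).comp (Ideal.Quotient.mk Q), RingHom.ext fun b ↦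
    e.symm_apply_eq.2 (hι b).symm⟩

lemma exists_ringHom_apply_eq [IsDomain V] (hV : IsAbsolutelyIntegrallyClosed V) {B T : Type*}
    [CommRing B] [IsDomain B] [IsIntegrallyClosed B] [CommRing T] [IsDomain T] [Algebra B T]
    [Module.IsTorsionFree B T] [Algebra.IsIntegral B T] {φ : B →+* V} (hφ : Function.Surjective φ)
    (x : T) {z : V} (hz : (minpoly B x).eval₂ φ z = 0) :
    ∃ χ : T →+* V, χ.comp (algebraMap B T) = φ ∧ χ x = z := by
  have hj : (aeval x : B[X] →ₐ[B] T).toRingHom.IsIntegral := by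
    refine .tower_top C _ ?_
    convert algebraMap_isIntegral_iff.2 ‹Algebra.IsIntegral B T›
    exact RingHom.ext fun b ↦ aeval_C x b
  obtain ⟨χ, hχ⟩ := hV.exists_ringHom_comp_eq (ψ := eval₂RingHom φ z) hj
    (fun v ↦ (hφ v).elim fun b hb ↦ ⟨C b, (eval₂_C φ z).trans hb⟩) <| by
      rw [minpoly.ker_eval (Algebra.IsIntegral.isIntegral x), Ideal.span_singleton_le_iff_mem]
      exact hz
  refine ⟨χ, RingHom.ext fun b ↦ ?_, ?_⟩
  · simpa using congr($hχ (C b))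
  · simpa using congr($hχ X)

end IsAbsolutelyIntegrallyClosed

section

variable {B A : Type*} [CommRing B] [CommRing A] [Algebra B A]

lemma zariskisMainProperty_of_finite_quotient [Algebra.FiniteType B A] {𝔪 : Ideal B}
    [Module.Finite B (A ⧸ 𝔪.map (algebraMap B A))] {𝔮 : Ideal A} [𝔮.IsPrime]
    (h : 𝔪.map (algebraMap B A) ≤ 𝔮) : Algebra.ZariskisMainProperty B 𝔮 := by
  have hle : 𝔪.map (algebraMap B A) ≤ (𝔮.under B).map (algebraMap B A) :=
    Ideal.map_mono (Ideal.map_le_iff_le_comap.1 h)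
  have : Module.Finite B (A ⧸ (𝔮.under B).map (algebraMap B A)) :=
    .of_surjective (Ideal.Quotient.factorₐ B hle).toLinearMap (Ideal.Quotient.factor_surjective hle)
  exact .of_finiteType_of_weaklyQuasiFiniteAt 𝔮

lemma exists_coeff_notMem_of_aeval_eq_zero {𝔪 : Ideal B} {𝔮 : Ideal A} [𝔮.IsPrime]
    (h : 𝔪.map (algebraMap B A) ≤ 𝔮) {p : B[X]} (hp : p.Monic) {x : A} (hx : x ∉ 𝔮)
    (hpx : aeval x p = 0) : ∃ i < p.natDegree, p.coeff i ∉ 𝔪 := by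
  by_contra! hcoeff
  rw [hp.as_sum, map_add, map_pow, aeval_X, map_sum] at hpx
  refine hx (Ideal.IsPrime.mem_of_pow_mem ‹_› _
    (eq_neg_of_add_eq_zero_left hpx ▸ neg_mem (sum_mem fun i hi ↦ ?_)))
  rw [map_mul, aeval_C]
  exact 𝔮.mul_mem_right _
    (h (Ideal.mem_map_of_mem _ (hcoeff i (Finset.mem_range.1 hi))))

end

lemma exists_ringHom_comp_eq_of_bijective_awayMap {B A C : Type*} [CommRing B] [CommRing A]
    [CommRing C] {f : B →+* A} {b : B}
    (h : Function.Bijective (Localization.awayMap f b)) {χ : B →+* C} (hb : IsUnit (χ b)) :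
    ∃ σ : A →+* C, σ.comp f = χ := by
  let e := RingEquiv.ofBijective _ h
  let χ' : Localization.Away b →+* C := IsLocalization.Away.lift b hb
  refine ⟨(χ'.comp e.symm.toRingHom).comp (algebraMap A _), RingHom.ext fun x ↦ ?_⟩
  have hx : e (algebraMap B _ x) = algebraMap A (Localization.Away (f b)) (f x) := by
    simp [e, Localization.awayMap, IsLocalization.Away.map]
  change χ' (e.symm (algebraMap A _ (f x))) = χ x
  rw [← hx, e.symm_apply_apply, IsLocalization.Away.lift_eq]

instance isIntegrallyClosed_mvPolynomial {σ V : Type*} [Finite σ] [CommRing V] [IsDomain V]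
    [IsIntegrallyClosed V] : IsIntegrallyClosed (MvPolynomial σ V) := by
  obtain ⟨n, ⟨e⟩⟩ := Finite.exists_equiv_fin σ
  suffices IsIntegrallyClosed (MvPolynomial (Fin n) V) from
    .of_equiv (MvPolynomial.renameEquiv V e).symm.toRingEquiv
  clear e
  induction n with
  | zero => exact .of_equiv (MvPolynomial.isEmptyRingEquiv V (Fin 0)).symm
  | succ n ih => exact .of_equiv (MvPolynomial.finSuccEquiv V n).symm.toRingEquiv

lemma exists_isUnit_eval {σ V : Type*} [CommRing V] [IsLocalRing V]
    [Infinite (IsLocalRing.ResidueField V)] {p : MvPolynomial σ V}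
    (hp : p.map (IsLocalRing.residue V) ≠ 0) : ∃ a, IsUnit (MvPolynomial.eval a p) := by
  by_contra! h
  refine hp (MvPolynomial.funext fun a ↦ ?_)
  obtain ⟨a, rfl⟩ := (IsLocalRing.residue_surjective (R := V)).comp_left a
  change MvPolynomial.eval (IsLocalRing.residue V ∘ a) _ = _
  rw [← MvPolynomial.map_eval, map_zero, IsLocalRing.residue_eq_zero_iff]
  exact h a

lemma exists_eq_C_mul_and_map_residue_ne_zero {σ V : Type*} [CommRing V] [IsDomain V]
    [ValuationRing V] {p : MvPolynomial σ V} (hp : p ≠ 0) :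
    ∃ c ≠ 0, ∃ q, p = MvPolynomial.C c * q ∧ q.map (IsLocalRing.residue V) ≠ 0 := by
  obtain ⟨m, hm, hmax⟩ := Finset.exists_maximalFor (fun m ↦ Ideal.span {p.coeff m}) p.support
    (MvPolynomial.support_nonempty.2 hp)
  have hdvd : MvPolynomial.C (p.coeff m) ∣ p := by
    refine (MvPolynomial.C_dvd_iff_dvd_coeff _ _).2 fun n ↦ ?_
    by_cases hn : n ∈ p.support
    · exact (ValuationRing.dvd_total _ _).elim id fun h ↦
        Ideal.span_singleton_le_span_singleton.1
          (hmax hn (Ideal.span_singleton_le_span_singleton.2 h))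
    · simp [MvPolynomial.notMem_support_iff.1 hn]
  obtain ⟨q, hq⟩ := hdvd
  have hm0 : p.coeff m ≠ 0 := MvPolynomial.mem_support_iff.1 hm
  have hqm : q.coeff m = 1 := by
    refine mul_left_cancel₀ hm0 ?_
    rw [mul_one, ← MvPolynomial.coeff_C_mul, ← hq]
  refine ⟨_, hm0, q, hq, fun h ↦ ?_⟩
  simpa [MvPolynomial.coeff_map, hqm] using congr_arg (MvPolynomial.coeff m) h

lemma injective_of_comp_map_residue_eq {σ V A A₀ : Type*} [CommRing V] [IsDomain V]
    [ValuationRing V] [CommRing A] [Algebra V A] [Module.IsTorsionFree V A] [CommRing A₀]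
    {β : MvPolynomial σ V →ₐ[V] A} {π : A →+* A₀}
    {γ : MvPolynomial σ (IsLocalRing.ResidueField V) →+* A₀} (hγ : Function.Injective γ)
    (h : γ.comp (MvPolynomial.map (IsLocalRing.residue V)) = π.comp β) :
    Function.Injective β := by
  rw [injective_iff_map_eq_zero]
  by_contra! ⟨p, hp, hp0⟩
  obtain ⟨c, hc, q, rfl, hq⟩ := exists_eq_C_mul_and_map_residue_ne_zero hp0
  rw [← MvPolynomial.smul_eq_C_mul, map_smul, smul_eq_zero_iff_right hc] at hp
  refine hq (hγ ?_)
  rw [map_zero]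
  simpa [hp] using congr($h q)

lemma exists_mvPolynomial_algHom_finite {V A : Type*} [CommRing V] [IsDomain V]
    [ValuationRing V] [CommRing A] [Algebra V A] [Module.IsTorsionFree V A]
    [Algebra.FiniteType V A] (hm : (IsLocalRing.maximalIdeal V).map (algebraMap V A) ≠ ⊤) :
    ∃ n, ∃ β : MvPolynomial (Fin n) V →ₐ[V] A, Function.Injective β ∧
      ((Ideal.Quotient.mk ((IsLocalRing.maximalIdeal V).map (algebraMap V A))).comp
        β.toRingHom).Finite := by
  set J := (IsLocalRing.maximalIdeal V).map (algebraMap V A)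
  let : Algebra (IsLocalRing.ResidueField V) (A ⧸ J) :=
    Ideal.Quotient.algebraQuotientOfLEComap Ideal.le_comap_map
  have : IsScalarTower V (IsLocalRing.ResidueField V) (A ⧸ J) := .of_algebraMap_eq' rfl
  have : Algebra.FiniteType (IsLocalRing.ResidueField V) (A ⧸ J) :=
    .of_restrictScalars_finiteType V _ _
  have : Nontrivial (A ⧸ J) := Ideal.Quotient.nontrivial_iff.2 hm
  obtain ⟨n, γ, hγ, hfin⟩ := exists_finite_inj_algHom_of_fg (IsLocalRing.ResidueField V) (A ⧸ J)
  choose t ht using fun i ↦ Ideal.Quotient.mk_surjective (γ (MvPolynomial.X i))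
  let β : MvPolynomial (Fin n) V →ₐ[V] A := MvPolynomial.aeval t
  have h : γ.toRingHom.comp (MvPolynomial.map (IsLocalRing.residue V)) =
      (Ideal.Quotient.mk J).comp β.toRingHom := by
    refine MvPolynomial.ringHom_ext (fun v ↦ ?_) fun i ↦ ?_
    · simp [β]; rfl
    · simp [β, ht]
  refine ⟨n, β, injective_of_comp_map_residue_eq hγ h, h ▸ RingHom.Finite.comp hfin ?_⟩
  exact .of_surjective _ (MvPolynomial.map_surjective _ IsLocalRing.residue_surjective)

namespace IsAbsolutelyIntegrallyClosed

variable {V A : Type*} [CommRing V] [IsDomain V] [ValuationRing V] [CommRing A] [IsDomain A]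
  [Algebra V A]

lemma exists_algHom_isUnit_apply (hV : IsAbsolutelyIntegrallyClosed V) {n : ℕ}
    [Algebra (MvPolynomial (Fin n) V) A] [IsScalarTower V (MvPolynomial (Fin n) V) A]
    [Module.IsTorsionFree (MvPolynomial (Fin n) V) A]
    [Algebra.IsIntegral (MvPolynomial (Fin n) V) A] {𝔮 : Ideal A} [𝔮.IsPrime]
    (hm : (IsLocalRing.maximalIdeal V).map (algebraMap V A) ≤ 𝔮) {x : A} (hx : x ∉ 𝔮) :
    ∃ χ : A →ₐ[V] V, IsUnit (χ x) := by
  let p := minpoly (MvPolynomial (Fin n) V) x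
  have hp : p.Monic := minpoly.monic (Algebra.IsIntegral.isIntegral x)
  rw [IsScalarTower.algebraMap_eq V (MvPolynomial (Fin n) V) A, ← Ideal.map_map,
    MvPolynomial.algebraMap_eq] at hm
  obtain ⟨i, hi, hpi⟩ := exists_coeff_notMem_of_aeval_eq_zero hm hp hx (minpoly.aeval _ x)
  have := hV.isAlgClosed_residueField
  have : Infinite (IsLocalRing.ResidueField V) := IsAlgClosed.instInfinite
  rw [← IsLocalRing.ker_residue, ← MvPolynomial.ker_map, RingHom.mem_ker] at hpi
  obtain ⟨a, ha⟩ := exists_isUnit_eval hpi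
  rw [← coeff_map] at ha
  obtain ⟨z, hz, hroot⟩ := hV.exists_isUnit_isRoot (hp.map _) (by rwa [hp.natDegree_map]) ha
  obtain ⟨χ, hχ, hχx⟩ := hV.exists_ringHom_apply_eq (φ := MvPolynomial.eval a)
    (fun v ↦ ⟨.C v, MvPolynomial.eval_C v⟩) x ((eval_map _ z).symm.trans hroot)
  refine ⟨⟨χ, fun v ↦ ?_⟩, hχx ▸ hz⟩
  have := congr($hχ (.C v))
  rwa [RingHom.comp_apply, MvPolynomial.eval_C, ← MvPolynomial.algebraMap_eq,
    ← IsScalarTower.algebraMap_apply] at this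

theorem nonempty_algHom (hV : IsAbsolutelyIntegrallyClosed V) [Module.IsTorsionFree V A]
    [Algebra.FiniteType V A] (hm : (IsLocalRing.maximalIdeal V).map (algebraMap V A) ≠ ⊤) :
    Nonempty (A →ₐ[V] V) := by
  obtain ⟨n, β, hβ, hfin⟩ := exists_mvPolynomial_algHom_finite hm
  obtain ⟨𝔮, hq, hle⟩ := Ideal.exists_le_maximal _ hm
  let B := MvPolynomial (Fin n) V
  let : Algebra B A := β.toRingHom.toAlgebra
  have : IsScalarTower V B A := .of_algHom β
  have : Algebra.FiniteType B A := .of_restrictScalars_finiteType V B A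
  have : Module.IsTorsionFree B A := Module.isTorsionFree_iff_algebraMap_injective.2 hβ
  have hmap : (IsLocalRing.maximalIdeal V).map (algebraMap V A) =
      ((IsLocalRing.maximalIdeal V).map (algebraMap V B)).map (algebraMap B A) := by
    rw [Ideal.map_map, ← IsScalarTower.algebraMap_eq]
  have : Module.Finite B (A ⧸ ((IsLocalRing.maximalIdeal V).map (algebraMap V B)).map
      (algebraMap B A)) := by
    rw [← hmap]
    exact hfin
  obtain ⟨g, hg, hbij⟩ := zariskisMainProperty_of_finite_quotient (hmap ▸ hle)
  obtain ⟨χ, hχ⟩ := hV.exists_algHom_isUnit_apply (n := n) (A := integralClosure B A)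
    (𝔮 := 𝔮.comap (integralClosure B A).val) (x := g)
    (Ideal.map_le_iff_le_comap.2 fun v hv ↦ hle (Ideal.mem_map_of_mem _ hv)) hg
  obtain ⟨σ, hσ⟩ := exists_ringHom_comp_eq_of_bijective_awayMap hbij hχ
  refine ⟨⟨σ, fun v ↦ ?_⟩⟩
  exact congr($hσ (algebraMap V _ v)).trans (χ.commutes v)

end IsAbsolutelyIntegrallyClosed

theorem IsAbsolutelyIntegrallyClosed.exists_ringHom_comp_eq_of_finiteType {R S V V' : Type*}
    [CommRing R] [CommRing S] [CommRing V] [IsDomain V] [ValuationRing V] [CommRing V']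
    [IsDomain V'] (hV : IsAbsolutelyIntegrallyClosed V) {f : R →+* S} (hf : f.FiniteType)
    {h : V →+* V'} (hh : Function.Injective h) (hm : (IsLocalRing.maximalIdeal V).map h ≠ ⊤)
    {g : R →+* V} {k : S →+* V'} (hk : k.comp f = h.comp g) :
    ∃ k' : S →+* V, k'.comp f = g := by
  algebraize [f, g, h, h.comp g]
  let k₀ : S →ₐ[R] V' := ⟨k, fun r ↦ congr($hk r)⟩
  let φ : TensorProduct R V S →ₐ[V] V' := Algebra.TensorProduct.lift (Algebra.ofId V V') k₀
    fun _ _ ↦ .all _ _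
  have : Module.IsTorsionFree V φ.range := Module.isTorsionFree_iff_algebraMap_injective.2
    (.of_comp (f := φ.range.val) hh)
  have : Algebra.FiniteType V φ.range := .of_surjective φ.rangeRestrict φ.rangeRestrict_surjective
  obtain ⟨σ⟩ := hV.nonempty_algHom (A := φ.range) fun htop ↦ hm <| by
    have hval : φ.range.val.toRingHom.comp (algebraMap V φ.range) = h := rfl
    rw [← hval, ← Ideal.map_map, htop, Ideal.map_top]
  let k' : S →ₐ[R] V := ((σ.comp φ.rangeRestrict).restrictScalars R).comp
    Algebra.TensorProduct.includeRight
  exact ⟨k', RingHom.ext k'.commutes⟩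

end UniversalDescent

open UniversalDescent in
theorem stmt16_general {R S : Type u} [CommRing R] [CommRing S] (f : R →+* S)
    (hfp : f.FinitePresentation)
    (hv : ∀ (V : Type u) [CommRing V] [IsDomain V] [ValuationRing V],
      IsAbsolutelyIntegrallyClosed V → ∀ g : R →+* V,
        ∃ (V' : Type u) (_ : CommRing V') (_ : IsDomain V') (h : V →+* V'), Function.Injective h ∧
          (IsLocalRing.maximalIdeal V).map h ≠ ⊤ ∧ ∃ k : S →+* V', k.comp f = h.comp g) :
    IsUniversalDescent f := by
  refine (descends_of_forall_valuationRing hfp fun V _ _ _ hV g ↦ ?_).isUniversalDescent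
  obtain ⟨V', _, _, h, hh, hm, k, hk⟩ := hv V hV g
  exact hV.exists_ringHom_comp_eq_of_finiteType (.of_finitePresentation hfp) hh hm hk

/-- Theorem 5.6: a finitely presented `v`-cover of commutative rings is a universal descent
morphism. Here `f : R →+* S` is a `v`-cover if for every valuation ring `V` and ring map
`R → V` there are an extension of valuation rings `V → V'` (an injective local homomorphism)
and a map `S → V'` making the evident square commute. -/
theorem stmt16 {R S : Type u} [CommRing R] [CommRing S] (f : R →+* S)
    (hfp : f.FinitePresentation)
    (hv : ∀ (V : Type u) (_ : CommRing V) (_ : IsDomain V), ValuationRing V →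
      ∀ g : R →+* V, ∃ (V' : Type u) (_ : CommRing V') (_ : IsDomain V'),
        ValuationRing V' ∧ ∃ h : V →+* V', Function.Injective h ∧ IsLocalHom h ∧
          ∃ k : S →+* V', k.comp f = h.comp g) :
    IsUniversalDescent f := by
  refine stmt16_general f hfp fun V _ _ _ _ g ↦ ?_
  obtain ⟨V', _, _, _, h, hh, hloc, k, hk⟩ := hv V _ _ ‹_› g
  have hle := ((IsLocalRing.local_hom_TFAE h).out 0 2 rfl rfl).1 hloc
  exact ⟨V', ‹_›, ‹_›, h, hh, ne_top_of_le_ne_top (Ideal.IsPrime.ne_top inferInstance) hle, k, hk⟩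
end

section
/- Let K be a field complete with respect to a nontrivial nonarchimedean absolute value, with ring of integers O_K, and let π ∈ O_K be a nonzero nonunit. Let R → S be a homomorphism of O_K-algebras such that π is a nonzerodivisor on both R and S, and suppose R is π-adically complete (R → lim_n R/π^n R is bijective). Then R → S is a universal descent morphism if and only if R → Ŝ is a universal descent morphism, where Ŝ = lim_n S/π^n S is the π-adic completion of S. -/
/-!
Descent along `R → Ŝ` implies descent along `R → S` because the first map factors through the
second. For the converse, let `P` be a thick class of complexes of `R`-modules containing all
restrictions along `R → Ŝ`. Every complex is reached from K-injective ones by thick operations, so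
it is enough to prove `P J` for `J` K-injective with injective terms. As `J = Hom(R, J)`, consider
the class `Q` of those `X` with `P (Hom(X, J))`. It is thick, and it contains all restrictions along
`R → Ŝ`, since `Hom(K, J)` is again such a restriction when `K` is.

The derived `ϖ`-completion of `X` is the cone of `T - ϖ` on `X⟦T⟧`. It preserves acyclic complexes
and short exact sequences, it agrees with `X` if the terms of `X` are `ϖ`-adically complete, and
for a complex of `ϖ`-torsion-free `S`-modules it is the termwise adic completion, which is a complex
of `Ŝ`-modules. Resolving by torsion-free modules, `Q` thus contains the derived completions of all
complexes of `S`-modules. Descent along `R → S` then puts the derived completion of `R` into `Q`,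
and this is `R` itself.
-/

open CategoryTheory CategoryTheory.Pretriangulated

universe u

open IsUltrametricDist

/-- The ring of integers `O_K = {x : K | ‖x‖ ≤ 1}` of a nonarchimedean normed field. -/
def ringOfIntegers (K : Type u) [NontriviallyNormedField K] [IsUltrametricDist K] :
    Subring K where
  carrier := {x : K | ‖x‖ ≤ 1}
  one_mem' := by simp
  mul_mem' {a b} ha hb := by
    simpa [norm_mul] using mul_le_one₀ ha (norm_nonneg b) hb
  add_mem' {a b} ha hb := le_trans (norm_add_le_max a b) (max_le ha hb)
  zero_mem' := by simp
  neg_mem' {a} ha := by simpa using ha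

open Limits ZeroObject CochainComplex HomComplex

section Thick

variable {C : Type*} [Category* C] [Abelian C]

/-- A thick class of complexes: it contains the acyclic complexes and is closed under direct
summands and under two-out-of-three in short exact sequences. These are the classes of complexes
whose images in the derived category form a thick triangulated subcategory. -/
structure IsThick (P : ObjectProperty (CochainComplex C ℤ)) : Prop where
  of_acyclic {X : CochainComplex C ℤ} (hX : X.Acyclic) : P X
  of_retract {X Y : CochainComplex C ℤ} (h : Retract X Y) (hY : P Y) : P X
  X₁ {S : ShortComplex (CochainComplex C ℤ)} (hS : S.ShortExact) (h₂ : P S.X₂) (h₃ : P S.X₃) :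
    P S.X₁
  X₂ {S : ShortComplex (CochainComplex C ℤ)} (hS : S.ShortExact) (h₁ : P S.X₁) (h₃ : P S.X₃) :
    P S.X₂
  X₃ {S : ShortComplex (CochainComplex C ℤ)} (hS : S.ShortExact) (h₁ : P S.X₁) (h₂ : P S.X₂) :
    P S.X₃

lemma shortExact_triangleRotateShortComplex {X Y : CochainComplex C ℤ} (f : X ⟶ Y) :
    (mappingCone.triangleRotateShortComplex f).ShortExact :=
  HomologicalComplex.shortExact_of_degreewise_shortExact _ fun i =>
    (mappingCone.triangleRotateShortComplexSplitting f i).shortExact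

lemma acyclic_mappingCone {X Y : CochainComplex C ℤ} (f : X ⟶ Y) [hf : QuasiIso f] :
    (mappingCone f).Acyclic := by
  have hmem := (HomotopyCategory.quotient_map_mem_quasiIso_iff f).2 hf
  rw [HomotopyCategory.quasiIso_eq_trW_subcategoryAcyclic] at hmem
  exact (HomotopyCategory.quotient_obj_mem_subcategoryAcyclic_iff_acyclic _).1
    ((ObjectProperty.trW_iff_of_distinguished _ _
      (HomotopyCategory.mappingCone_triangleh_distinguished f)).1 hmem)

lemma quasiIso_of_acyclic {X Y : CochainComplex C ℤ} (f : X ⟶ Y) (hX : X.Acyclic)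
    (hY : Y.Acyclic) : QuasiIso f where
  quasiIsoAt i := (quasiIsoAt_iff_exactAt f i (hX i)).2 (hY i)

namespace IsThick

variable {P : ObjectProperty (CochainComplex C ℤ)}

lemma mappingCone (hP : IsThick P) {X Y : CochainComplex C ℤ} (f : X ⟶ Y)
    (hX : P (X⟦(1 : ℤ)⟧)) (hY : P Y) : P (mappingCone f) :=
  hP.X₂ (shortExact_triangleRotateShortComplex f) hY hX

lemma shift_one_iff (hP : IsThick P) {X Y : CochainComplex C ℤ} (f : X ⟶ Y) [QuasiIso f] :
    P (X⟦(1 : ℤ)⟧) ↔ P Y :=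
  have hS := shortExact_triangleRotateShortComplex f
  have hcone := hP.of_acyclic (acyclic_mappingCone f)
  ⟨hP.X₁ hS hcone, fun hY => hP.X₃ hS hY hcone⟩

lemma quasiIso_iff (hP : IsThick P) {X Y : CochainComplex C ℤ} (f : X ⟶ Y) [QuasiIso f] :
    P X ↔ P Y :=
  (hP.shift_one_iff (𝟙 X)).symm.trans (hP.shift_one_iff f)

end IsThick

end Thick

section DerivedCategory

open DerivedCategory

variable {C : Type*} [Category* C] [Abelian C] [HasDerivedCategory C]
  {P : ObjectProperty (CochainComplex C ℤ)}

namespace IsThick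

lemma iff_of_iso_Q (hP : IsThick P) {X Y : CochainComplex C ℤ} (e : Q.obj X ≅ Q.obj Y) :
    P X ↔ P Y := by
  obtain ⟨Z, s, hs, g, hg⟩ := right_fac e.hom
  have : QuasiIso s := (isIso_Q_map_iff_quasiIso _ s).1 hs
  have : IsIso (Q.map g) := by
    rw [IsIso.eq_inv_comp] at hg
    rw [← hg]
    infer_instance
  have : QuasiIso g := (isIso_Q_map_iff_quasiIso _ g).1 this
  exact (hP.quasiIso_iff s).symm.trans (hP.quasiIso_iff g)

lemma iff_shift_Q (hP : IsThick P) {X X' : CochainComplex C ℤ} {Y : DerivedCategory C}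
    (e : Q.obj X ≅ Y) (e' : Q.obj X' ≅ Y⟦(1 : ℤ)⟧) : P X ↔ P X' :=
  ((hP.quasiIso_iff (𝟙 X)).trans (hP.shift_one_iff (𝟙 X)).symm).trans (hP.iff_of_iso_Q
    ((Q.commShiftIso (1 : ℤ)).app X ≪≫
      (CategoryTheory.shiftFunctor _ (1 : ℤ)).mapIso e ≪≫ e'.symm))

lemma of_distTriang_Q (hP : IsThick P) {T : Triangle (DerivedCategory C)}
    (hT : T ∈ distTriang (DerivedCategory C)) {X Y Z : CochainComplex C ℤ}
    (eX : Q.obj X ≅ T.obj₁) (eY : Q.obj Y ≅ T.obj₂) (eZ : Q.obj Z ≅ T.obj₃)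
    (hX : P X) (hY : P Y) : P Z := by
  obtain ⟨X', Y', f, ⟨e⟩⟩ := (mem_distTriang_iff T).1 hT
  have hX' : P X' := (hP.iff_of_iso_Q (eX ≪≫ Triangle.π₁.mapIso e)).1 hX
  have hY' : P Y' := (hP.iff_of_iso_Q (eY ≪≫ Triangle.π₂.mapIso e)).1 hY
  exact (hP.iff_of_iso_Q (eZ ≪≫ Triangle.π₃.mapIso e)).2
    (hP.mappingCone f ((hP.shift_one_iff (𝟙 X')).2 hX') hY')

lemma of_retract_Q (hP : IsThick P) {A B : DerivedCategory C} (r : Retract A B)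
    {X Y : CochainComplex C ℤ} (eX : Q.obj X ≅ A) (eY : Q.obj Y ≅ B) (hY : P Y) : P X := by
  obtain ⟨Z, g, h, hT⟩ := distinguished_cocone_triangle r.i
  have hh : h ≫ r.i⟦(1 : ℤ)⟧' = 0 := comp_distTriang_mor_zero₃₁ _ hT
  obtain ⟨e, -, -⟩ := exists_iso_binaryBiproduct_of_distTriang _ hT
    ((cancel_mono (r.i⟦(1 : ℤ)⟧')).1 (hh.trans zero_comp.symm))
  have := preservesBinaryBiproducts_of_preservesBiproducts (Q (C := C))
  let W := Q.objPreimage Z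
  let e' : Q.obj Y ≅ Q.obj (X ⊞ W) :=
    eY ≪≫ e ≪≫ biprod.mapIso eX.symm (Q.objObjPreimageIso Z).symm ≪≫ (Q.mapBiprod X W).symm
  exact hP.of_retract ⟨biprod.inl, biprod.fst, biprod.inl_fst⟩ ((hP.iff_of_iso_Q e').1 hY)

end IsThick

lemma isThick_inverseImage_Q {P : ObjectProperty (DerivedCategory C)}
    (iso : ∀ X Y, (X ≅ Y) → P X → P Y) (shift : ∀ X, P X → P (X⟦(-1 : ℤ)⟧))
    (tri : ∀ T ∈ distTriang (DerivedCategory C), P T.obj₁ → P T.obj₂ → P T.obj₃)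
    (retract : ∀ X Y (i : X ⟶ Y) (r : Y ⟶ X), i ≫ r = 𝟙 X → P Y → P X)
    {X₀ : DerivedCategory C} (hX₀ : P X₀) : IsThick (P.inverseImage Q) where
  of_acyclic {X} hX := by
    have := quasiIso_of_acyclic (0 : X ⟶ 0) hX
      (HomologicalComplex.acyclic_of_isZero _ (isZero_zero _))
    exact retract _ _ 0 0 (((Q.map_isZero (isZero_zero _)).of_iso
      (asIso (Q.map (0 : X ⟶ 0)))).eq_of_src _ _) hX₀
  of_retract r hY := retract _ _ _ _ (r.map Q).retract hY
  X₁ hS h₂ h₃ :=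
    iso _ _ ((shiftEquiv (DerivedCategory C) (1 : ℤ)).unitIso.app _).symm
      (shift _ (tri _ (rot_of_distTriang _ (triangleOfSES_distinguished hS)) h₂ h₃))
  X₂ hS h₁ h₃ :=
    tri _ (inv_rot_of_distTriang _ (triangleOfSES_distinguished hS)) (shift _ h₃) h₁
  X₃ hS h₁ h₂ := tri _ (triangleOfSES_distinguished hS) h₁ h₂

end DerivedCategory

section Descent

open DerivedCategory

/-- Complexes of `R`-modules, the chain-level model of `D(R)`. -/
abbrev ModuleComplex (R : Type u) [CommRing R] := CochainComplex (ModuleCat.{u} R) ℤ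

variable {R S T : Type u} [CommRing R] [CommRing S] [CommRing T]

/-- Termwise restriction of scalars of complexes along a ring homomorphism. -/
noncomputable abbrev restrictComplex (f : R →+* S) : ModuleComplex S ⥤ ModuleComplex R :=
  (ModuleCat.restrictScalars.{u} f).mapHomologicalComplex (ComplexShape.up ℤ)

theorem isUniversalDescent_iff {f : R →+* S} :
    IsUniversalDescent f ↔ ∀ P : ObjectProperty (ModuleComplex R), IsThick P →
      (∀ K, P ((restrictComplex f).obj K)) → ∀ X, P X := by
  let := HasDerivedCategory.standard (ModuleCat.{u} R)
  constructor
  · intro hf P hP hres X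
    let e (Y : DerivedCategory (ModuleCat.{u} R)) : Q.obj (Q.objPreimage Y) ≅ Y :=
      Q.objObjPreimageIso Y
    refine (hP.iff_of_iso_Q (e (Q.obj X))).1 (hf (fun Y => P (Q.objPreimage Y))
      (fun Y Y' h => (hP.iff_of_iso_Q (e Y ≪≫ h ≪≫ (e Y').symm)).1)
      (fun Y => (hP.iff_shift_Q (e Y) (e _)).1)
      (fun Y => (hP.iff_shift_Q (e _) (e Y ≪≫
        ((shiftEquiv (DerivedCategory (ModuleCat.{u} R)) (1 : ℤ)).counitIso.app Y).symm)).2)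
      (fun D hD => hP.of_distTriang_Q hD (e _) (e _) (e _))
      (fun Y Y' i r hir => hP.of_retract_Q ⟨i, r, hir⟩ (e Y) (e Y'))
      (fun K => (hP.iff_of_iso_Q (e _)).2 (hres K)) (Q.obj X))
  · intro hf P iso _ shift_neg tri retract hres Y
    exact iso _ _ (Q.objObjPreimageIso Y) (hf _
      (isThick_inverseImage_Q iso shift_neg tri retract (hres 0)) hres (Q.objPreimage Y))

lemma IsUniversalDescent.of_comp {f : R →+* S} {g : S →+* T}
    (h : IsUniversalDescent (g.comp f)) : IsUniversalDescent f :=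
  isUniversalDescent_iff.2 fun P hP hres =>
    isUniversalDescent_iff.1 h P hP fun K => hres ((restrictComplex g).obj K)

end Descent

section ThickInverseImage

variable {C D : Type*} [Category* C] [Abelian C] [Category* D] [Abelian D]
  {P : ObjectProperty (CochainComplex D ℤ)}

namespace IsThick

lemma inverseImage (hP : IsThick P) (F : CochainComplex C ℤ ⥤ CochainComplex D ℤ)
    [F.PreservesZeroMorphisms]
    (exact : ∀ S : ShortComplex (CochainComplex C ℤ), S.ShortExact → (S.map F).ShortExact)
    (acyclic : ∀ X : CochainComplex C ℤ, X.Acyclic → (F.obj X).Acyclic) :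
    IsThick (P.inverseImage F) where
  of_acyclic hX := hP.of_acyclic (acyclic _ hX)
  of_retract r hY := hP.of_retract (r.map F) hY
  X₁ hS h₂ h₃ := hP.X₁ (exact _ hS) h₂ h₃
  X₂ hS h₁ h₃ := hP.X₂ (exact _ hS) h₁ h₃
  X₃ hS h₁ h₂ := hP.X₃ (exact _ hS) h₁ h₂

lemma inverseImage_op (hP : IsThick P) (F : (CochainComplex C ℤ)ᵒᵖ ⥤ CochainComplex D ℤ)
    [F.PreservesZeroMorphisms]
    (exact : ∀ S : ShortComplex (CochainComplex C ℤ), S.ShortExact → (S.op.map F).ShortExact)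
    (acyclic : ∀ X : CochainComplex C ℤ, X.Acyclic → (F.obj (.op X)).Acyclic) :
    IsThick fun X => P (F.obj (.op X)) where
  of_acyclic hX := hP.of_acyclic (acyclic _ hX)
  of_retract r hY := hP.of_retract (r.op.map F) hY
  X₁ hS h₂ h₃ := hP.X₃ (exact _ hS) h₃ h₂
  X₂ hS h₁ h₃ := hP.X₂ (exact _ hS) h₃ h₁
  X₃ hS h₁ h₂ := hP.X₁ (exact _ hS) h₂ h₁

end IsThick

end ThickInverseImage

section ConeFunctor

variable {D : Type*} [Category* D] [Abelian D]
  {X Y X' Y' : CochainComplex D ℤ} {φ : X ⟶ Y} {φ' : X' ⟶ Y'}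
  {a : X ⟶ X'} {b : Y ⟶ Y'} (comm : φ ≫ b = a ≫ φ')

@[simp]
lemma mappingConeMap_f_fst_v (p q : ℤ) (h : p + 1 = q) :
    (mappingCone.map φ φ' a b comm).f p ≫ (mappingCone.fst φ').1.v p q h =
      (mappingCone.fst φ).1.v p q h ≫ a.f q := by
  simp [mappingCone.ext_from_iff _ q p h, mappingCone.map]

@[simp]
lemma mappingConeMap_f_snd_v (p : ℤ) :
    (mappingCone.map φ φ' a b comm).f p ≫ (mappingCone.snd φ').v p p (add_zero p) =
      (mappingCone.snd φ).v p p (add_zero p) ≫ b.f p := by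
  simp [mappingCone.ext_from_iff _ (p + 1) p rfl, mappingCone.map]

@[simp]
lemma inl_v_mappingConeMap_f (p q : ℤ) (h : p + (-1) = q) :
    (mappingCone.inl φ).v p q h ≫ (mappingCone.map φ φ' a b comm).f q =
      a.f p ≫ (mappingCone.inl φ').v p q h := by
  simp [mappingCone.map]

@[simp]
lemma inr_f_mappingConeMap_f (p : ℤ) :
    (mappingCone.inr φ).f p ≫ (mappingCone.map φ φ' a b comm).f p =
      b.f p ≫ (mappingCone.inr φ').f p := by
  simp [mappingCone.map]

variable (φ φ') in
lemma mappingConeMap_zero : mappingCone.map φ φ' 0 0 (by simp) = 0 := by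
  ext n
  simp [mappingCone.ext_from_iff _ (n + 1) n rfl, mappingCone.map]

lemma shortExact_of_id_eq_add {S A B : ShortComplex D} (p : S ⟶ A) (i : A ⟶ S) (q : S ⟶ B)
    (j : B ⟶ S) (h : p ≫ i + q ≫ j = 𝟙 S) (hA : A.ShortExact) (hB : B.ShortExact) :
    S.ShortExact where
  exact := by
    rw [ShortComplex.exact_iff_isZero_homology, IsZero.iff_id_eq_zero,
      ← ShortComplex.homologyMap_id, ← h, ShortComplex.homologyMap_add,
      ShortComplex.homologyMap_comp, ShortComplex.homologyMap_comp,
      (A.exact_iff_isZero_homology.1 hA.exact).eq_of_tgt (ShortComplex.homologyMap p) 0,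
      (B.exact_iff_isZero_homology.1 hB.exact).eq_of_tgt (ShortComplex.homologyMap q) 0,
      zero_comp, zero_comp, add_zero]
  mono_f := by
    have := hA.mono_f
    have := hB.mono_f
    refine Preadditive.mono_of_cancel_zero _ fun u hu => ?_
    have hp : u ≫ p.τ₁ = 0 := zero_of_comp_mono A.f (by simp [p.comm₁₂, reassoc_of% hu])
    have hq : u ≫ q.τ₁ = 0 := zero_of_comp_mono B.f (by simp [q.comm₁₂, reassoc_of% hu])
    rw [← Category.comp_id u, ← ShortComplex.id_τ₁, ← h]
    simp [reassoc_of% hp, reassoc_of% hq]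
  epi_g := by
    have := hA.epi_g
    have := hB.epi_g
    refine Preadditive.epi_of_cancel_zero _ fun u hu => ?_
    have hi : i.τ₃ ≫ u = 0 := zero_of_epi_comp A.g (by simp [← i.comm₂₃_assoc, hu])
    have hj : j.τ₃ ≫ u = 0 := zero_of_epi_comp B.g (by simp [← j.comm₂₃_assoc, hu])
    rw [← Category.id_comp u, ← ShortComplex.id_τ₃, ← h]
    simp [hi, hj]

/-- The short complex of mapping cones induced by a morphism of short complexes of complexes. -/
noncomputable def coneShortComplex {S T : ShortComplex (CochainComplex D ℤ)} (φ : S ⟶ T) :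
    ShortComplex (CochainComplex D ℤ) where
  f := mappingCone.map φ.τ₁ φ.τ₂ S.f T.f φ.comm₁₂
  g := mappingCone.map φ.τ₂ φ.τ₃ S.g T.g φ.comm₂₃
  zero := by
    rw [← mappingCone.map_comp]
    simp only [S.zero, T.zero]
    exact mappingConeMap_zero _ _

lemma shortExact_coneShortComplex {S T : ShortComplex (CochainComplex D ℤ)} (φ : S ⟶ T)
    (hS : S.ShortExact) (hT : T.ShortExact) : (coneShortComplex φ).ShortExact := by
  refine HomologicalComplex.shortExact_of_degreewise_shortExact _ fun n => ?_
  refine shortExact_of_id_eq_add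
    (A := S.map (HomologicalComplex.eval D (.up ℤ) (n + 1)))
    (B := T.map (HomologicalComplex.eval D (.up ℤ) n))
    { τ₁ := (mappingCone.fst φ.τ₁).1.v n (n + 1) rfl
      τ₂ := (mappingCone.fst φ.τ₂).1.v n (n + 1) rfl
      τ₃ := (mappingCone.fst φ.τ₃).1.v n (n + 1) rfl
      comm₁₂ := (mappingConeMap_f_fst_v φ.comm₁₂ n (n + 1) rfl).symm
      comm₂₃ := (mappingConeMap_f_fst_v φ.comm₂₃ n (n + 1) rfl).symm }
    { τ₁ := (mappingCone.inl φ.τ₁).v (n + 1) n (by simp)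
      τ₂ := (mappingCone.inl φ.τ₂).v (n + 1) n (by simp)
      τ₃ := (mappingCone.inl φ.τ₃).v (n + 1) n (by simp)
      comm₁₂ := inl_v_mappingConeMap_f φ.comm₁₂ (n + 1) n (by simp)
      comm₂₃ := inl_v_mappingConeMap_f φ.comm₂₃ (n + 1) n (by simp) }
    { τ₁ := (mappingCone.snd φ.τ₁).v n n (add_zero n)
      τ₂ := (mappingCone.snd φ.τ₂).v n n (add_zero n)
      τ₃ := (mappingCone.snd φ.τ₃).v n n (add_zero n)
      comm₁₂ := (mappingConeMap_f_snd_v φ.comm₁₂ n).symm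
      comm₂₃ := (mappingConeMap_f_snd_v φ.comm₂₃ n).symm }
    { τ₁ := (mappingCone.inr φ.τ₁).f n
      τ₂ := (mappingCone.inr φ.τ₂).f n
      τ₃ := (mappingCone.inr φ.τ₃).f n
      comm₁₂ := inr_f_mappingConeMap_f φ.comm₁₂ n
      comm₂₃ := inr_f_mappingConeMap_f φ.comm₂₃ n }
    (by ext <;> exact mappingCone.id_X _ _ _ _)
    (hS.map_of_exact _) (hT.map_of_exact _)

variable {C : Type*} [Category* C]

/-- The cone of a natural transformation between functors with values in complexes. -/
noncomputable def coneFunctor {F G : C ⥤ CochainComplex D ℤ} (τ : F ⟶ G) :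
    C ⥤ CochainComplex D ℤ where
  obj X := mappingCone (τ.app X)
  map f := mappingCone.map _ _ (F.map f) (G.map f) (τ.naturality f).symm
  map_id X := by
    simp only [F.map_id, G.map_id]
    exact mappingCone.map_id _
  map_comp f g := by
    simp only [F.map_comp, G.map_comp]
    exact mappingCone.map_comp _ _ _ _ _ _ _ _ _

variable {F G : C ⥤ CochainComplex D ℤ} (τ : F ⟶ G)

lemma acyclic_coneFunctor_obj {X : C} (hF : (F.obj X).Acyclic) (hG : (G.obj X).Acyclic) :
    ((coneFunctor τ).obj X).Acyclic :=
  have := quasiIso_of_acyclic (τ.app X) hF hG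
  acyclic_mappingCone (τ.app X)

variable [HasZeroMorphisms C] [F.PreservesZeroMorphisms] [G.PreservesZeroMorphisms]

instance : (coneFunctor τ).PreservesZeroMorphisms where
  map_zero X Y := by
    simp only [coneFunctor, F.map_zero, G.map_zero]
    exact mappingConeMap_zero _ _

lemma shortExact_map_coneFunctor {S : ShortComplex C} (hF : (S.map F).ShortExact)
    (hG : (S.map G).ShortExact) : (S.map (coneFunctor τ)).ShortExact :=
  shortExact_coneShortComplex (S.mapNatTrans τ) hF hG

end ConeFunctor

section AdicSeries

variable {R : Type*} [CommRing R] (ϖ : R) (M : Type*) [AddCommGroup M] [Module R M]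

/-- Multiplication by `T - ϖ` on `M⟦T⟧`, with a power series encoded as its sequence of
coefficients. Its cone is the derived `ϖ`-completion of `M`. -/
def shiftSubSMul : (ℕ → M) →ₗ[R] (ℕ → M) where
  toFun y
    | 0 => -(ϖ • y 0)
    | n + 1 => y n - ϖ • y (n + 1)
  map_add' y z := by
    funext n
    cases n <;> simp only [Pi.add_apply, smul_add] <;> abel
  map_smul' r y := by
    funext n
    cases n <;> simp [smul_sub, smul_comm r ϖ]

/-- The partial sum `∑ i < n, ϖ ^ i • y i`, as a linear map in the coefficients `y`. -/
noncomputable def adicPartialSum (n : ℕ) : (ℕ → M) →ₗ[R] M :=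
  ∑ i ∈ Finset.range n, ϖ ^ i • LinearMap.proj i

variable {M} {N : Type*} [AddCommGroup N] [Module R N]

lemma shiftSubSMul_comp (φ : M →ₗ[R] N) (y : ℕ → M) :
    shiftSubSMul ϖ N (φ ∘ y) = φ ∘ shiftSubSMul ϖ M y := by
  funext n
  cases n <;> simp [shiftSubSMul]

@[simp]
lemma adicPartialSum_zero (y : ℕ → M) : adicPartialSum ϖ M 0 y = 0 := by
  simp [adicPartialSum]

lemma adicPartialSum_succ (n : ℕ) (y : ℕ → M) :
    adicPartialSum ϖ M (n + 1) y = adicPartialSum ϖ M n y + ϖ ^ n • y n := by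
  simp [adicPartialSum, Finset.sum_range_succ]

lemma adicPartialSum_succ' (n : ℕ) (y : ℕ → M) :
    adicPartialSum ϖ M (n + 1) y = ϖ • adicPartialSum ϖ M n (fun i => y (i + 1)) + y 0 := by
  simp [adicPartialSum, Finset.sum_range_succ', Finset.smul_sum, smul_smul, pow_succ']

lemma adicPartialSum_comp (φ : M →ₗ[R] N) (n : ℕ) (y : ℕ → M) :
    adicPartialSum ϖ N n (φ ∘ y) = φ (adicPartialSum ϖ M n y) := by
  simp [adicPartialSum]

lemma adicPartialSum_shiftSubSMul (n : ℕ) (y : ℕ → M) :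
    adicPartialSum ϖ M (n + 1) (shiftSubSMul ϖ M y) = -(ϖ ^ (n + 1) • y n) := by
  induction n with
  | zero => simp [adicPartialSum_succ, shiftSubSMul]
  | succ n ih =>
    rw [adicPartialSum_succ, ih, pow_succ ϖ (n + 1), mul_smul]
    simp only [shiftSubSMul, LinearMap.coe_mk, AddHom.coe_mk, smul_sub]
    abel

lemma mem_span_singleton_pow_smul_top {n : ℕ} {x : M} :
    x ∈ (Ideal.span {ϖ} ^ n • ⊤ : Submodule R M) ↔ ∃ z : M, ϖ ^ n • z = x := by
  simp [Ideal.span_singleton_pow, Submodule.ideal_span_singleton_smul,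
    Submodule.mem_smul_pointwise_iff_exists]

lemma adicPartialSum_sub_mem {m n : ℕ} (h : m ≤ n) (y : ℕ → M) :
    adicPartialSum ϖ M n y - adicPartialSum ϖ M m y ∈
      (Ideal.span {ϖ} ^ m • ⊤ : Submodule R M) := by
  induction n, h using Nat.le_induction with
  | base => simp
  | succ n hmn ih =>
    rw [adicPartialSum_succ, add_sub_right_comm]
    refine add_mem ih ((mem_span_singleton_pow_smul_top ϖ).2 ⟨ϖ ^ (n - m) • y n, ?_⟩)
    rw [smul_smul, pow_mul_pow_sub ϖ hmn]

variable (M) in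
/-- The sum `∑ i, ϖ ^ i • y i` in the `ϖ`-adic completion of `M`. -/
noncomputable def adicSeries : (ℕ → M) →ₗ[R] AdicCompletion (Ideal.span {ϖ}) M :=
  AdicCompletion.lift _ (fun n => Submodule.mkQ _ ∘ₗ adicPartialSum ϖ M n) fun h =>
    LinearMap.ext fun y => (Submodule.Quotient.eq _).2 (adicPartialSum_sub_mem ϖ h y)

lemma adicSeries_val (y : ℕ → M) (n : ℕ) :
    (adicSeries ϖ M y).val n = Submodule.Quotient.mk (adicPartialSum ϖ M n y) :=
  rfl

lemma adicSeries_eq_smul_add_of (y : ℕ → M) :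
    adicSeries ϖ M y = ϖ • adicSeries ϖ M (fun i => y (i + 1)) + AdicCompletion.of _ M (y 0) := by
  refine AdicCompletion.ext fun n => (?_ : _ = Submodule.Quotient.mk
    (ϖ • adicPartialSum ϖ M n (fun i => y (i + 1)) + y 0))
  rw [adicSeries_val, ← adicPartialSum_succ', eq_comm]
  exact (Submodule.Quotient.eq _).2 (adicPartialSum_sub_mem ϖ n.le_succ y)

lemma adicSeries_eq_zero_iff {y : ℕ → M} :
    adicSeries ϖ M y = 0 ↔ ∀ n, ∃ z, ϖ ^ n • z = adicPartialSum ϖ M n y := by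
  simp only [AdicCompletion.ext_iff, adicSeries_val, AdicCompletion.val_zero_apply,
    Submodule.Quotient.mk_eq_zero, mem_span_singleton_pow_smul_top]

lemma map_adicSeries (φ : M →ₗ[R] N) (y : ℕ → M) :
    AdicCompletion.map (Ideal.span {ϖ}) φ (adicSeries ϖ M y) = adicSeries ϖ N (φ ∘ y) :=
  AdicCompletion.ext fun n => by
    rw [adicSeries_val, adicPartialSum_comp]
    rfl

lemma adicSeries_shiftSubSMul (y : ℕ → M) : adicSeries ϖ M (shiftSubSMul ϖ M y) = 0 :=
  (adicSeries_eq_zero_iff ϖ).2 fun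
    | 0 => ⟨0, by simp⟩
    | n + 1 => ⟨-y n, by rw [adicPartialSum_shiftSubSMul, smul_neg]⟩

lemma adicSeries_surjective : Function.Surjective (adicSeries ϖ M) := fun x => by
  obtain ⟨a, rfl⟩ := AdicCompletion.mk_surjective _ _ x
  have hdiff (n : ℕ) : ∃ b, ϖ ^ (n + 1) • b = a (n + 2) - a (n + 1) := by
    rw [← mem_span_singleton_pow_smul_top, ← Submodule.Quotient.eq]
    exact AdicCompletion.AdicCauchySequence.mk_eq_mk (n + 1).le_succ a
  choose b hb using hdiff
  let y (n : ℕ) : M := n.casesOn (a 1) b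
  have hsum (n : ℕ) : adicPartialSum ϖ M (n + 1) y = a (n + 1) := by
    induction n with
    | zero => simp [adicPartialSum_succ, y]
    | succ n ih => rw [adicPartialSum_succ, ih, hb, add_sub_cancel]
  refine ⟨y, AdicCompletion.ext fun n => ?_⟩
  cases n with
  | zero => exact (Submodule.Quotient.eq _).2 (by simp)
  | succ n => exact congrArg Submodule.Quotient.mk (hsum n)

variable (M) in
lemma shiftSubSMul_injective_of_isHausdorff [IsHausdorff (Ideal.span {ϖ}) M] :
    Function.Injective (shiftSubSMul ϖ M) := by
  refine (injective_iff_map_eq_zero _).2 fun y hy => ?_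
  have hsucc (n : ℕ) : y n = ϖ • y (n + 1) := sub_eq_zero.1 (congrFun hy (n + 1))
  have hpow (n k : ℕ) : y n = ϖ ^ k • y (n + k) := by
    induction k with
    | zero => simp
    | succ k ih => rw [ih, hsucc (n + k), smul_smul, ← pow_succ, add_assoc]
  exact funext fun n => IsHausdorff.haus ‹_› _ fun k => SModEq.zero.2
    ((mem_span_singleton_pow_smul_top ϖ).2 ⟨_, (hpow n k).symm⟩)

variable (M) in
lemma exact_shiftSubSMul_adicSeries_of_isAdicComplete [IsAdicComplete (Ideal.span {ϖ}) M] :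
    Function.Exact (shiftSubSMul ϖ M) (adicSeries ϖ M) := fun y => by
  refine ⟨fun hy => ?_, fun ⟨y, hy⟩ => hy ▸ adicSeries_shiftSubSMul ϖ y⟩
  -- The preimage of `y` has the series of the shifts of `y` as coefficients.
  let e := AdicCompletion.ofLinearEquiv (Ideal.span {ϖ}) M
  let z (n : ℕ) : M := e.symm (adicSeries ϖ M fun i => y (i + n))
  have hz₀ : z 0 = 0 := e.symm.map_eq_zero_iff.2 hy
  have hz (n : ℕ) : z n = ϖ • z (n + 1) + y n := by
    rw [LinearEquiv.symm_apply_eq, map_add, map_smul, e.apply_symm_apply,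
      adicSeries_eq_smul_add_of]
    simp [e, add_right_comm, add_assoc]
  refine ⟨fun n => z (n + 1), funext fun n => ?_⟩
  cases n with
  | zero => exact neg_eq_of_add_eq_zero_right ((hz 0).symm.trans hz₀)
  | succ n => simp [shiftSubSMul, hz (n + 1)]

variable {ϖ}

lemma shiftSubSMul_injective (hM : IsSMulRegular M ϖ) :
    Function.Injective (shiftSubSMul ϖ M) := by
  refine (injective_iff_map_eq_zero _).2 fun y hy => funext fun n => ?_
  induction n with
  | zero => exact hM.right_eq_zero_of_smul (neg_eq_zero.1 (congrFun hy 0))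
  | succ n ih =>
    have hn : y n - ϖ • y (n + 1) = 0 := congrFun hy (n + 1)
    exact hM.right_eq_zero_of_smul (by simpa [ih] using hn)

lemma exact_shiftSubSMul_adicSeries (hM : IsSMulRegular M ϖ) :
    Function.Exact (shiftSubSMul ϖ M) (adicSeries ϖ M) := fun y => by
  refine ⟨fun hy => ?_, fun ⟨y, hy⟩ => hy ▸ adicSeries_shiftSubSMul ϖ y⟩
  -- The quotients `z n` of the partial sums by `ϖ ^ n` are, up to sign, the preimage of `y`.
  choose z hz using (adicSeries_eq_zero_iff ϖ).1 hy
  have hz₀ : z 0 = 0 := by simpa using hz 0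
  have hyz (n : ℕ) : y n = ϖ • z (n + 1) - z n := by
    refine hM.pow n ?_
    dsimp only
    rw [smul_sub, hz n, smul_smul, ← pow_succ, hz (n + 1), adicPartialSum_succ,
      add_sub_cancel_left]
  refine ⟨fun n => -z (n + 1), funext fun n => ?_⟩
  cases n with
  | zero => simp [shiftSubSMul, hyz, hz₀]
  | succ n => simp [shiftSubSMul, hyz, neg_add_eq_sub]

end AdicSeries

section DerivedCompletion

variable (R : Type u) [CommRing R]

/-- The functor sending a module to the module of sequences in it. -/
def sequenceFunctor : ModuleCat.{u} R ⥤ ModuleCat.{u} R where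
  obj M := ModuleCat.of R (ℕ → M)
  map φ := ModuleCat.ofHom (φ.hom.compLeft ℕ)

instance : (sequenceFunctor R).Additive where

lemma shortExact_map_sequenceFunctor {S : ShortComplex (ModuleCat.{u} R)} (hS : S.ShortExact) :
    (S.map (sequenceFunctor R)).ShortExact := by
  refine ModuleCat.shortComplex_shortExact _ (fun y => ?_) hS.moduleCat_injective_f.comp_left
    hS.moduleCat_surjective_g.comp_left
  have hex := (ShortComplex.ShortExact.moduleCat_exact_iff_function_exact S).1 hS.exact
  refine funext_iff.trans ((forall_congr' fun n => hex (y n)).trans ?_)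
  exact Classical.skolem.trans (exists_congr fun z => funext_iff.symm)

lemma preservesFiniteLimits_and_colimits_sequenceFunctor :
    PreservesFiniteLimits (sequenceFunctor R) ∧ PreservesFiniteColimits (sequenceFunctor R) :=
  ((sequenceFunctor R).exact_tfae.out 0 3 :).1 fun _ => shortExact_map_sequenceFunctor R

instance : PreservesFiniteLimits (sequenceFunctor R) :=
  (preservesFiniteLimits_and_colimits_sequenceFunctor R).1

instance : PreservesFiniteColimits (sequenceFunctor R) :=
  (preservesFiniteLimits_and_colimits_sequenceFunctor R).2

variable {R} (ϖ : R)

/-- `shiftSubSMul` as an endomorphism of the functor of sequences. -/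
def shiftSubSMulNatTrans : sequenceFunctor R ⟶ sequenceFunctor R where
  app M := ModuleCat.ofHom (shiftSubSMul ϖ M)
  naturality _ _ φ := ModuleCat.hom_ext (LinearMap.ext (shiftSubSMul_comp ϖ φ.hom))

/-- The derived `ϖ`-completion of a complex `X`, modelled by the cone of `T - ϖ` on `X⟦T⟧`. -/
noncomputable def derivedCompletion : ModuleComplex R ⥤ ModuleComplex R :=
  coneFunctor (NatTrans.mapHomologicalComplex (shiftSubSMulNatTrans ϖ) (.up ℤ))

lemma IsThick.inverseImage_derivedCompletion {P : ObjectProperty (ModuleComplex R)}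
    (hP : IsThick P) : IsThick (P.inverseImage (derivedCompletion ϖ)) :=
  hP.inverseImage (coneFunctor _)
    (fun _ hS => shortExact_map_coneFunctor _ (hS.map_of_exact _) (hS.map_of_exact _))
    (fun _ hX => acyclic_coneFunctor_obj _ (fun i => (hX i).map (sequenceFunctor R))
      (fun i => (hX i).map (sequenceFunctor R)))

end DerivedCompletion

section AdicCompletionComplex

/-- Adic completion, as a functor from modules over `R` to modules over the completion of `R`. -/
noncomputable def adicCompletionFunctor {R : Type u} [CommRing R] (I : Ideal R) :
    ModuleCat.{u} R ⥤ ModuleCat.{u} (AdicCompletion I R) where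
  obj M := ModuleCat.of _ (AdicCompletion I M)
  map φ := ModuleCat.ofHom (AdicCompletion.map I φ.hom)
  map_comp φ ψ := by simp [← AdicCompletion.map_comp]

instance {R : Type u} [CommRing R] (I : Ideal R) :
    (adicCompletionFunctor I).PreservesZeroMorphisms where
  map_zero _ _ := ModuleCat.hom_ext (AdicCompletion.map_zero I)

variable {R S : Type u} [CommRing R] [CommRing S] (f : R →+* S) (ϖ : R)

lemma shortExact_of_exact_apply {T : ShortComplex (ModuleComplex R)}
    (exact : ∀ i, Function.Exact (T.f.f i) (T.g.f i))
    (injective : ∀ i, Function.Injective (T.f.f i))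
    (surjective : ∀ i, Function.Surjective (T.g.f i)) : T.ShortExact :=
  HomologicalComplex.shortExact_of_degreewise_shortExact _ fun i =>
    ModuleCat.shortComplex_shortExact _ (exact i) (injective i) (surjective i)

/-- The ring homomorphism from `R` to the `f ϖ`-adic completion of `S`. -/
noncomputable abbrev toAdicCompletion : R →+* AdicCompletion (Ideal.span {f ϖ}) S :=
  (algebraMap S (AdicCompletion (Ideal.span {f ϖ}) S)).comp f

/-- `adicSeries` over `S`, as a natural transformation of functors to `R`-modules. -/
noncomputable def restrictAdicSeries :
    ModuleCat.restrictScalars.{u} f ⋙ sequenceFunctor R ⟶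
      adicCompletionFunctor (Ideal.span {f ϖ}) ⋙
        ModuleCat.restrictScalars.{u} (toAdicCompletion f ϖ) where
  app M := ModuleCat.ofHom
    (Y := (ModuleCat.restrictScalars.{u} (toAdicCompletion f ϖ)).obj
      ((adicCompletionFunctor (Ideal.span {f ϖ})).obj M))
    { toFun := adicSeries (f ϖ) M
      map_add' := map_add (adicSeries (f ϖ) M)
      map_smul' r y := ((adicSeries (f ϖ) M).map_smul (f r) y).trans
        (algebraMap_smul (AdicCompletion (Ideal.span {f ϖ}) S) (f r) _).symm }
  naturality _ _ φ := by
    ext y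
    exact (map_adicSeries (f ϖ) φ.hom y).symm

lemma map_ofLinearEquiv_symm {M N : Type*} [AddCommGroup M] [Module R M] [AddCommGroup N]
    [Module R N] (I : Ideal R) [IsAdicComplete I M] [IsAdicComplete I N] (φ : M →ₗ[R] N)
    (x : AdicCompletion I M) :
    φ ((AdicCompletion.ofLinearEquiv I M).symm x) =
      (AdicCompletion.ofLinearEquiv I N).symm (AdicCompletion.map I φ x) := by
  rw [LinearEquiv.eq_symm_apply]
  exact (AdicCompletion.map_of I φ _).symm.trans (by rw [AdicCompletion.of_ofLinearEquiv_symm])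

variable {f ϖ}

lemma IsThick.derivedCompletion_iff {P : ObjectProperty (ModuleComplex R)} (hP : IsThick P)
    {X Y : ModuleComplex R} (e : ((sequenceFunctor R).mapHomologicalComplex (.up ℤ)).obj X ⟶ Y)
    (exact : ∀ i, Function.Exact (shiftSubSMul ϖ (X.X i)) (e.f i))
    (injective : ∀ i, Function.Injective (shiftSubSMul ϖ (X.X i)))
    (surjective : ∀ i, Function.Surjective (e.f i)) :
    P ((derivedCompletion ϖ).obj X) ↔ P Y := by
  let T : ShortComplex (ModuleComplex R) :=
    { f := (NatTrans.mapHomologicalComplex (shiftSubSMulNatTrans ϖ) (.up ℤ)).app X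
      g := e
      zero := by
        ext i y
        exact (exact i).apply_apply_eq_zero y }
  have hT : T.ShortExact := shortExact_of_exact_apply exact injective surjective
  have := mappingCone.quasiIso_descShortComplex hT
  exact hP.quasiIso_iff (X := CochainComplex.mappingCone T.f) (mappingCone.descShortComplex T)

lemma IsThick.derivedCompletion_restrictComplex_iff {P : ObjectProperty (ModuleComplex R)}
    (hP : IsThick P) {K : ModuleComplex S} (hK : ∀ i, IsSMulRegular (K.X i) (f ϖ)) :
    P ((derivedCompletion ϖ).obj ((restrictComplex f).obj K)) ↔
      P ((restrictComplex (toAdicCompletion f ϖ)).obj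
        (((adicCompletionFunctor (Ideal.span {f ϖ})).mapHomologicalComplex (.up ℤ)).obj K)) := by
  have hshift (i : ℤ) :
      ⇑(shiftSubSMul ϖ (((restrictComplex f).obj K).X i)) = shiftSubSMul (f ϖ) (K.X i) := by
    funext y n
    cases n <;> rfl
  refine hP.derivedCompletion_iff
    ((NatTrans.mapHomologicalComplex (restrictAdicSeries f ϖ) (.up ℤ)).app K)
    (fun i => ?_) (fun i => ?_) fun i => adicSeries_surjective (f ϖ)
  · rw [hshift]
    exact exact_shiftSubSMul_adicSeries (hK i)
  · rw [hshift]
    exact shiftSubSMul_injective (hK i)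

lemma IsThick.derivedCompletion_iff_of_isAdicComplete {P : ObjectProperty (ModuleComplex R)}
    (hP : IsThick P) {X : ModuleComplex R}
    (hX : ∀ i, IsAdicComplete (Ideal.span {ϖ}) (X.X i)) :
    P ((derivedCompletion ϖ).obj X) ↔ P X := by
  refine hP.derivedCompletion_iff
    { f i := ModuleCat.ofHom ((AdicCompletion.ofLinearEquiv (Ideal.span {ϖ}) (X.X i)).symm ∘ₗ
        adicSeries ϖ (X.X i))
      comm' i j _ := ModuleCat.hom_ext (LinearMap.ext fun y => ?_) } (fun i y => ?_)
    (fun i => shiftSubSMul_injective_of_isHausdorff ϖ (X.X i))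
    (fun i => (AdicCompletion.ofLinearEquiv _ (X.X i)).symm.surjective.comp
      (adicSeries_surjective ϖ))
  · exact (map_ofLinearEquiv_symm _ _ _).trans (congrArg _ (map_adicSeries ϖ (X.d i j).hom y))
  · exact (AdicCompletion.ofLinearEquiv _ (X.X i)).symm.map_eq_zero_iff.trans
      (exact_shiftSubSMul_adicSeries_of_isAdicComplete ϖ (X.X i) y)

end AdicCompletionComplex

section TorsionFreeResolution

open HomologicalComplex

lemma exists_epi_acyclic_projective {C : Type*} [Category* C] [Abelian C] [EnoughProjectives C]
    (X : CochainComplex C ℤ) :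
    ∃ (A : CochainComplex C ℤ) (p : A ⟶ X),
      A.Acyclic ∧ (∀ i, Projective (A.X i)) ∧ ∀ i, Epi (p.f i) := by
  let F : CochainComplex C ℤ := { X i := Projective.over (X.X (i - 1)), d _ _ := 0 }
  let α : Cochain F X (-1) := Cochain.mk fun i j hij =>
    Projective.π (X.X (i - 1)) ≫ (XIsoOfEq X (by lia : i - 1 = j)).hom
  let p : mappingCone (𝟙 F) ⟶ X :=
    mappingCone.desc (𝟙 F) α (Cocycle.homOf (.mk (δ (-1) 0 α) 1 rfl (δ_δ _ _ _ α))) (by simp)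
  refine ⟨_, p, acyclic_mappingCone (𝟙 F), fun i => ?_, fun i => ?_⟩
  · have (j : ℤ) : Projective (F.X j) := inferInstanceAs (Projective (Projective.over _))
    exact .of_iso (homotopyCofiber.XIsoBiprod (𝟙 F) i (i + 1) rfl).symm inferInstance
  · have hi : i + 1 + -1 = i := by lia
    have : Epi ((mappingCone.inl (𝟙 F)).v (i + 1) i hi ≫ p.f i) := by
      rw [mappingCone.inl_v_desc_f, Cochain.mk_v]
      infer_instance
    exact epi_of_epi ((mappingCone.inl (𝟙 F)).v (i + 1) i hi) (p.f i)

lemma exists_shortExact_acyclic_regular {S : Type u} [CommRing S] {s : S} (hs : IsRegular s)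
    (X : ModuleComplex S) :
    ∃ (T A : ModuleComplex S) (ι : T ⟶ A) (p : A ⟶ X) (w : ι ≫ p = 0),
      (ShortComplex.mk ι p w).ShortExact ∧ A.Acyclic ∧ ∀ i, IsSMulRegular (T.X i) s := by
  obtain ⟨A, p, hA, hproj, hp⟩ := exists_epi_acyclic_projective X
  have : Epi p := epi_of_epi_f _ hp
  refine ⟨_, A, kernel.ι p, p, kernel.condition p, ⟨ShortComplex.exact_kernel p⟩, hA,
    fun i => ?_⟩
  have : Module.Projective S (A.X i) := (IsProjective.iff_projective _).2 (hproj i)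
  have hreg : IsSMulRegular (A.X i) s := Module.Flat.isSMulRegular_of_isRegular hs
  exact hreg.of_injective ((kernel.ι p).f i).hom ((ModuleCat.mono_iff_injective _).1 inferInstance)

end TorsionFreeResolution

section HomComplex

variable {R S : Type u} [CommRing R] [CommRing S]

lemma exists_restrictComplex_obj_iso (f : R →+* S) {Y : ModuleComplex R} (ρ : S →+* End Y)
    (hρ : ∀ r, ρ (f r) = r • 𝟙 Y) : ∃ K, Nonempty ((restrictComplex f).obj K ≅ Y) := by
  let ρX (i : ℤ) : S →+* Module.End R (Y.X i) :=
    { toFun s := ((ρ s).f i).hom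
      map_one' := by rw [map_one]; rfl
      map_mul' s t := by rw [map_mul]; rfl
      map_zero' := by rw [map_zero]; rfl
      map_add' s t := by rw [map_add]; rfl }
  let (i : ℤ) : Module S (Y.X i) := .compHom (Y.X i) (ρX i)
  let K : ModuleComplex S :=
    { X i := ModuleCat.of S (Y.X i)
      d i j := ModuleCat.ofHom
        { toFun := Y.d i j
          map_add' := map_add (Y.d i j).hom
          map_smul' s y := ConcreteCategory.congr_hom ((ρ s).comm i j) y }
      shape i j h := ModuleCat.hom_ext (LinearMap.ext fun y =>
        (ConcreteCategory.congr_hom (Y.shape i j h) y :))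
      d_comp_d' i j k _ _ := ModuleCat.hom_ext (LinearMap.ext fun y =>
        (ConcreteCategory.congr_hom (Y.d_comp_d i j k) y :)) }
  let e (i : ℤ) : ((restrictComplex f).obj K).X i ≃ₗ[R] Y.X i :=
    { AddEquiv.refl (Y.X i) with
      map_smul' r y :=
        ConcreteCategory.congr_hom (congrArg (HomologicalComplex.Hom.f · i) (hρ r)) y }
  exact ⟨K, ⟨HomologicalComplex.Hom.isoOfComponents fun i => (e i).toModuleIso⟩⟩

variable (R) {C : Type*} [Category.{u} C] [Preadditive C] [Linear R C]

/-- The contravariant functor `X ↦ Hom(X, J)` from complexes in an `R`-linear category to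
complexes of `R`-modules. -/
def homComplex (J : CochainComplex C ℤ) : (CochainComplex C ℤ)ᵒᵖ ⥤ ModuleComplex R where
  obj X :=
    { X p := ModuleCat.of R (Cochain X.unop J p)
      d p q := ModuleCat.ofHom (δ_hom R X.unop J p q)
      shape p q h := ModuleCat.hom_ext (LinearMap.ext fun z => δ_shape p q h z)
      d_comp_d' p q r _ _ := ModuleCat.hom_ext (LinearMap.ext fun z => δ_δ p q r z) }
  map φ :=
    { f p := ModuleCat.ofHom
        { toFun z := (Cochain.ofHom φ.unop).comp z (zero_add p)
          map_add' z z' := Cochain.comp_add _ _ _ _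
          map_smul' r z := Cochain.comp_smul _ _ _ _ }
      comm' p q _ := ModuleCat.hom_ext (LinearMap.ext fun z => δ_ofHom_comp φ.unop z q) }
  map_id X := by
    ext p z : 3
    exact Cochain.id_comp (z : Cochain _ J p)
  map_comp φ ψ := by
    ext p z : 3
    exact (congrArg (Cochain.comp · (z : Cochain _ J p) (zero_add p))
      (Cochain.ofHom_comp _ _)).trans
      (Cochain.comp_assoc_of_first_is_zero_cochain _ _ _ _)

variable (J : CochainComplex C ℤ)

instance : (homComplex R J).Additive where
  map_add {X Y φ ψ} := by
    ext p z : 3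
    exact (congrArg (Cochain.comp · (z : Cochain _ J p) (zero_add p))
      (Cochain.ofHom_add _ _)).trans
      (Cochain.add_comp _ _ _ _)

lemma homComplex_map_smul_op {X Y : CochainComplex C ℤ} (r : R) (φ : X ⟶ Y) :
    (homComplex R J).map (r • φ).op = r • (homComplex R J).map φ.op := by
  ext p z : 3
  refine Eq.trans ?_ (Cochain.smul_comp r (Cochain.ofHom φ) (z : Cochain _ J p) (zero_add p))
  exact congrArg (Cochain.comp · (z : Cochain _ J p) (zero_add p)) (by ext; simp)

variable {R} in
lemma exists_restrictComplex_obj_iso_homComplex (f : R →+* S) (J : ModuleComplex R)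
    (K : ModuleComplex S) :
    ∃ L, Nonempty ((restrictComplex f).obj L ≅
      (homComplex R J).obj (.op ((restrictComplex f).obj K))) := by
  refine exists_restrictComplex_obj_iso f
    { toFun s := (homComplex R J).map ((restrictComplex f).map (s • 𝟙 K)).op
      map_one' := by simp [End.one_def]
      map_mul' s t := by
        rw [End.mul_def, ← Functor.map_comp, ← op_comp, ← Functor.map_comp]
        simp [smul_smul, mul_comm]
      map_zero' := by simp
      map_add' s t := by simp [add_smul] } fun r => ?_
  calc (homComplex R J).map ((restrictComplex f).map (f r • 𝟙 K)).op
    _ = (homComplex R J).map (r • 𝟙 ((restrictComplex f).obj K)).op := rfl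
    _ = r • 𝟙 _ := by rw [homComplex_map_smul_op, op_id, (homComplex R J).map_id]

variable {A : Type*} [Category.{u} A] [Abelian A] [Linear R A] {J : CochainComplex A ℤ}

lemma shortExact_map_homComplex (hJ : ∀ i, Injective (J.X i))
    {T : ShortComplex (CochainComplex A ℤ)} (hT : T.ShortExact) :
    (T.op.map (homComplex R J)).ShortExact := by
  have hdeg (i : ℤ) : (T.map (HomologicalComplex.eval A (.up ℤ) i)).ShortExact :=
    hT.map_of_exact _
  have hf (i : ℤ) : Mono (T.f.f i) := (hdeg i).mono_f
  have hg (i : ℤ) : Epi (T.g.f i) := (hdeg i).epi_g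
  have comp_v {X Y : CochainComplex A ℤ} (φ : X ⟶ Y) {p : ℤ} (z : Cochain Y J p) {i j : ℤ}
      (hij : i + p = j) :
      ((Cochain.ofHom φ).comp z (zero_add p)).v i j hij = φ.f i ≫ z.v i j hij := by simp
  refine shortExact_of_exact_apply (fun p (z : Cochain T.X₂ J p) => ⟨fun hz => ?_, ?_⟩)
    (fun p => (injective_iff_map_eq_zero _).2 fun (z : Cochain T.X₃ J p) hz => ?_)
    fun p (z : Cochain T.X₁ J p) => ?_
  · have hfz (i j : ℤ) (hij : i + p = j) : T.f.f i ≫ z.v i j hij = 0 :=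
      (comp_v T.f z hij).symm.trans (Cochain.congr_v hz i j hij)
    choose y hy using fun i j hij =>
      have : Epi (T.map (HomologicalComplex.eval A (.up ℤ) i)).g := hg i
      (⟨(hdeg i).exact.desc _ (hfz i j hij), (hdeg i).exact.g_desc _ _⟩ :
        ∃ y : T.X₃.X i ⟶ J.X j, T.g.f i ≫ y = z.v i j hij)
    exact ⟨Cochain.mk y, Cochain.ext _ _ fun i j hij =>
      (comp_v T.g (Cochain.mk y) hij).trans (hy i j hij)⟩
  · rintro ⟨y : Cochain T.X₃ J p, rfl⟩
    exact ConcreteCategory.congr_hom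
      (congrArg (HomologicalComplex.Hom.f · p) (T.op.map (homComplex R J)).zero) y
  · exact Cochain.ext z 0 fun i j hij => zero_of_epi_comp (T.g.f i)
      ((comp_v T.g z hij).symm.trans (Cochain.congr_v hz i j hij))
  · let y : Cochain T.X₂ J p :=
      .mk fun i j hij => Injective.factorThru (z.v i j hij) (T.f.f i)
    exact ⟨y, Cochain.ext _ _ fun i j hij =>
      (comp_v T.f y hij).trans (Injective.comp_factorThru _ _)⟩

lemma acyclic_homComplex_obj [J.IsKInjective] {X : CochainComplex A ℤ} (hX : X.Acyclic) :
    ((homComplex R J).obj (.op X)).Acyclic := by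
  intro p
  rw [HomologicalComplex.exactAt_iff' _ (p - 1) p (p + 1) (by simp) (by simp),
    ShortComplex.moduleCat_exact_iff]
  intro (z : Cochain X J p) hz
  exact IsKInjective.eq_δ_of_cocycle (Cocycle.mk z (p + 1) rfl hz) hX (p - 1) (by lia)

end HomComplex

section BaseRing

variable {R : Type u} [CommRing R]

/-- The base ring, viewed as a complex concentrated in degree `0`. -/
noncomputable abbrev baseRingComplex (R : Type u) [CommRing R] : ModuleComplex R :=
  (CochainComplex.singleFunctor (ModuleCat R) 0).obj (ModuleCat.of R R)

lemma linearEquiv_or_subsingleton_baseRingComplex_X (i : ℤ) :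
    Nonempty (R ≃ₗ[R] (baseRingComplex R).X i) ∨ Subsingleton ((baseRingComplex R).X i) := by
  rcases eq_or_ne i 0 with rfl | hi
  · exact .inl
      ⟨(HomologicalComplex.singleObjXSelf (.up ℤ) 0 (ModuleCat.of R R)).symm.toLinearEquiv⟩
  · exact .inr (ModuleCat.subsingleton_of_isZero
      (HomologicalComplex.isZero_single_obj_X (.up ℤ) 0 (ModuleCat.of R R) i hi))

/-- Cochains from the base ring to `J` are the elements of `J`. -/
noncomputable def cochainBaseRingEquiv (J : ModuleComplex R) (p : ℤ) :
    Cochain (baseRingComplex R) J p ≃ₗ[R] J.X p :=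
  { (Cochain.fromSingleEquiv (zero_add p)).trans ModuleCat.homAddEquiv with
    map_smul' r z :=
      congrArg ModuleCat.Hom.hom (Linear.comp_smul _ _ _ _ r (z.v 0 p (zero_add p))) } ≪≫ₗ
    LinearMap.ringLmapEquivSelf R R (J.X p)

/-- The complex `Hom(R, J)` is `J`. -/
noncomputable def homComplexBaseRingIso (J : ModuleComplex R) :
    J ≅ (homComplex R J).obj (.op (baseRingComplex R)) :=
  HomologicalComplex.Hom.isoOfComponents (fun p => (cochainBaseRingEquiv J p).symm.toModuleIso)
    fun p q _ => ModuleCat.hom_ext (LinearMap.ext fun y => by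
      let g : ModuleCat.of R R ⟶ J.X p := ModuleCat.ofHom (.toSpanSingleton R _ y)
      refine (Cochain.δ_fromSingleMk g (zero_add p) q q (zero_add q)).trans ?_
      exact congrArg (Cochain.fromSingleMk · (zero_add q)) (ModuleCat.hom_ext (LinearMap.ext_ring
        ((congrArg (J.d p q) (one_smul R y)).trans (one_smul R _).symm))))

end BaseRing

section Product

variable {R : Type u} [CommRing R] {ι : Type}

/-- The product of a family of complexes of modules. -/
def piComplex (X : ι → ModuleComplex R) : ModuleComplex R where
  X i := ModuleCat.of R (∀ n, (X n).X i)
  d i j := ModuleCat.ofHom (LinearMap.piMap fun n => ((X n).d i j).hom)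
  shape i j h := ModuleCat.hom_ext (LinearMap.ext fun x => funext fun n =>
    ConcreteCategory.congr_hom ((X n).shape i j h) (x n))
  d_comp_d' i j k _ _ := ModuleCat.hom_ext (LinearMap.ext fun x => funext fun n =>
    ConcreteCategory.congr_hom ((X n).d_comp_d i j k) (x n))

/-- The morphism of products induced by a family of morphisms of complexes. -/
def piComplexMap {X Y : ι → ModuleComplex R} (φ : ∀ n, X n ⟶ Y n) :
    piComplex X ⟶ piComplex Y where
  f i := ModuleCat.ofHom (LinearMap.piMap fun n => ((φ n).f i).hom)
  comm' i j _ := ModuleCat.hom_ext (LinearMap.ext fun x => funext fun n =>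
    ConcreteCategory.congr_hom ((φ n).comm i j) (x n))

/-- The projection from a product of complexes to a factor. -/
def piComplexProj (X : ι → ModuleComplex R) (n : ι) : piComplex X ⟶ X n where
  f _ := ModuleCat.ofHom (LinearMap.proj n)
  comm' _ _ _ := rfl

lemma acyclic_piComplex {X : ι → ModuleComplex R} (hX : ∀ n, (X n).Acyclic) :
    (piComplex X).Acyclic := by
  intro i
  rw [HomologicalComplex.exactAt_iff' _ (i - 1) i (i + 1) (by simp) (by simp),
    ShortComplex.moduleCat_exact_iff]
  intro (x : ∀ n, (X n).X i) hx
  choose y hy using fun n => (ShortComplex.moduleCat_exact_iff _).1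
    (((X n).exactAt_iff' (i - 1) i (i + 1) (by simp) (by simp)).1 (hX n i)) (x n) (congr_fun hx n)
  exact ⟨y, funext hy⟩

lemma shortExact_piComplex {T : ι → ShortComplex (ModuleComplex R)} (hT : ∀ n, (T n).ShortExact) :
    ∃ w, (ShortComplex.mk (piComplexMap fun n => (T n).f) (piComplexMap fun n => (T n).g)
      w).ShortExact := by
  have hdeg (n : ι) (i : ℤ) :
      ((T n).map (HomologicalComplex.eval (ModuleCat R) (.up ℤ) i)).ShortExact :=
    (hT n).map_of_exact _
  have w : (piComplexMap fun n => (T n).f) ≫ (piComplexMap fun n => (T n).g) = 0 := by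
    ext i x
    exact funext fun n => ConcreteCategory.congr_hom
      (congrArg (HomologicalComplex.Hom.f · i) (T n).zero) (x n)
  refine ⟨w, shortExact_of_exact_apply (fun i (y : ∀ n, (T n).X₂.X i) => ?_)
    (fun i => Function.Injective.piMap fun n => (hdeg n i).moduleCat_injective_f)
    fun i => Function.Surjective.piMap fun n => (hdeg n i).moduleCat_surjective_g⟩
  have hex (n : ι) := (ShortComplex.ShortExact.moduleCat_exact_iff_function_exact _).1
    (hdeg n i).exact
  refine funext_iff.trans ((forall_congr' fun n => hex n (y n)).trans ?_)
  exact Classical.skolem.trans (exists_congr fun z => funext_iff.symm)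

lemma isKInjective_piComplex {X : ι → ModuleComplex R} (hX : ∀ n, (X n).IsKInjective) :
    (piComplex X).IsKInjective where
  nonempty_homotopy_zero {K} φ hK := by
    let h (n : ι) := IsKInjective.homotopyZero (φ ≫ piComplexProj X n) hK
    let H (i j : ℤ) : K.X i ⟶ (piComplex X).X j :=
      ModuleCat.ofHom (LinearMap.pi fun n => ((h n).hom i j).hom)
    refine ⟨{ hom := H, zero i j hij := ?_, comm i := ?_ }⟩
    · ext x
      exact funext fun n => ConcreteCategory.congr_hom ((h n).zero i j hij) x
    · ext x
      funext n
      have comm := (h n).comm i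
      rw [dNext_eq _ (show i + 1 = i + 1 from rfl),
        prevD_eq _ (show i - 1 + 1 = i by simp)] at comm ⊢
      exact ConcreteCategory.congr_hom comm x

lemma injective_piComplex_X {X : ι → ModuleComplex R} {i : ℤ} [∀ n, Injective ((X n).X i)] :
    Injective ((piComplex X).X i) :=
  Injective.of_iso (ModuleCat.piIsoPi fun n => (X n).X i) inferInstance

end Product

section Filtration

variable {R M : Type*} [Ring R] [AddCommGroup M] [Module R M] {F : ℕ → Submodule R M}

variable (F) in
/-- The diagonal map from a filtered module to the product of its quotients. -/
def filtrationDiagonal : M →ₗ[R] ∀ n, M ⧸ F n :=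
  LinearMap.pi fun n => (F n).mkQ

/-- The endomorphism `id - shift` of the product of the quotients of a module by a decreasing
filtration, whose kernel is the inverse limit of these quotients. -/
def idSubTransition (hF : Antitone F) : (∀ n, M ⧸ F n) →ₗ[R] ∀ n, M ⧸ F n :=
  LinearMap.pi fun n =>
    .proj n - Submodule.factor (hF n.le_succ) ∘ₗ .proj (n + 1)

variable (hF : Antitone F)

lemma idSubTransition_mk (x : ℕ → M) :
    idSubTransition hF (fun n => Submodule.Quotient.mk (x n)) =
      fun n => Submodule.Quotient.mk (x n - x (n + 1)) := rfl

lemma surjective_idSubTransition : Function.Surjective (idSubTransition hF) := by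
  intro y
  choose x hx using fun n => Submodule.Quotient.mk_surjective _ (y n)
  refine ⟨fun n => Submodule.Quotient.mk (-∑ k ∈ Finset.range n, x k), ?_⟩
  rw [idSubTransition_mk]
  funext n
  rw [← hx n, Finset.sum_range_succ]
  congr 1
  abel

lemma injective_filtrationDiagonal {N : ℕ} (hN : F N = ⊥) :
    Function.Injective (filtrationDiagonal F) := by
  refine (injective_iff_map_eq_zero _).2 fun x hx => ?_
  have : x ∈ F N := (Submodule.Quotient.mk_eq_zero _).1 (congr_fun hx N)
  simpa [hN] using this

lemma exact_filtrationDiagonal_idSubTransition {N : ℕ} (hN : F N = ⊥) :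
    Function.Exact (filtrationDiagonal F) (idSubTransition hF) := by
  intro y
  constructor
  · intro hy
    choose x hx using fun n => Submodule.Quotient.mk_surjective _ (y n)
    obtain rfl : (fun n => Submodule.Quotient.mk (x n)) = y := funext hx
    rw [idSubTransition_mk] at hy
    have hsucc (n : ℕ) : x n - x (n + 1) ∈ F n :=
      (Submodule.Quotient.mk_eq_zero _).1 (congr_fun hy n)
    have hle {n m : ℕ} (hnm : n ≤ m) : x n - x m ∈ F n := by
      induction m, hnm using Nat.le_induction with
      | base => simp
      | succ m hm ih => simpa using add_mem ih (hF hm (hsucc m))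
    refine ⟨x N, funext fun n => (Submodule.Quotient.eq _).2 ?_⟩
    rcases le_total n N with h | h
    · simpa using neg_mem (hle h)
    · have : x N - x n = 0 := by simpa [hN] using hle h
      rw [this]
      exact zero_mem _
  · rintro ⟨x, rfl⟩
    refine (idSubTransition_mk hF fun _ => x).trans (funext fun n => ?_)
    simp

end Filtration

section Truncation

variable {R : Type u} [CommRing R] (M : ModuleComplex R)

/-- The degree `i` part of the subcomplex of `M` consisting of everything in degrees below `-n`
and of the cycles in degree `-n`. -/
def lowSubmodule (n : ℕ) (i : ℤ) : Submodule R (M.X i) :=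
  (⨅ (_ : -n ≤ i) (j : ℤ), LinearMap.ker (M.d i j).hom) ⊓ ⨅ _ : -n < i, ⊥

variable {M}

lemma mem_lowSubmodule {n : ℕ} {i : ℤ} {x : M.X i} :
    x ∈ lowSubmodule M n i ↔ (-n ≤ i → ∀ j, M.d i j x = 0) ∧ (-n < i → x = 0) := by
  simp [lowSubmodule, Submodule.mem_iInf]

lemma d_mem_lowSubmodule {n : ℕ} {i : ℤ} {x : M.X i} (hx : x ∈ lowSubmodule M n i) (j : ℤ) :
    M.d i j x ∈ lowSubmodule M n j := by
  refine mem_lowSubmodule.2 ⟨fun _ k => ConcreteCategory.congr_hom (M.d_comp_d i j k) x,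
    fun hj => ?_⟩
  by_cases hij : i + 1 = j
  · exact (mem_lowSubmodule.1 hx).1 (by lia) j
  · exact ConcreteCategory.congr_hom (M.shape i j hij) x

variable (M)

lemma antitone_lowSubmodule (i : ℤ) : Antitone fun n => lowSubmodule M n i := by
  intro m n hmn x hx
  rw [mem_lowSubmodule] at hx ⊢
  exact ⟨fun h => hx.1 (by lia), fun h => hx.2 (by lia)⟩

lemma lowSubmodule_eq_bot {n : ℕ} {i : ℤ} (h : -n < i) : lowSubmodule M n i = ⊥ :=
  (Submodule.eq_bot_iff _).2 fun _ hx => (mem_lowSubmodule.1 hx).2 h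

lemma lowSubmodule_eq_top {n : ℕ} {i : ℤ} (h : i < -n) : lowSubmodule M n i = ⊤ :=
  eq_top_iff.2 fun _ _ => mem_lowSubmodule.2 ⟨by lia, by lia⟩

/-- The quotient of `M` by its part in degrees at most `-n`: a bounded below truncation. -/
def truncation (n : ℕ) : ModuleComplex R where
  X i := ModuleCat.of R (M.X i ⧸ lowSubmodule M n i)
  d i j := ModuleCat.ofHom
    (Submodule.mapQ _ _ (M.d i j).hom fun _ hx => d_mem_lowSubmodule hx j)
  shape i j h := ModuleCat.hom_ext (Submodule.linearMap_qext _ (LinearMap.ext fun x =>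
    congrArg Submodule.Quotient.mk (ConcreteCategory.congr_hom (M.shape i j h) x)))
  d_comp_d' i j k _ _ := ModuleCat.hom_ext (Submodule.linearMap_qext _ (LinearMap.ext fun x =>
    congrArg Submodule.Quotient.mk (ConcreteCategory.congr_hom (M.d_comp_d i j k) x)))

instance isStrictlyGE_truncation (n : ℕ) : (truncation M n).IsStrictlyGE (-n) :=
  (isStrictlyGE_iff _ _).2 fun i hi =>
    have : Subsingleton (M.X i ⧸ lowSubmodule M n i) :=
      Submodule.Quotient.subsingleton_iff.2 (lowSubmodule_eq_top M hi)
    ModuleCat.isZero_of_subsingleton (ModuleCat.of R (M.X i ⧸ lowSubmodule M n i))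

/-- The diagonal map from `M` to the product of its truncations. -/
def toPiTruncation : M ⟶ piComplex (truncation M) where
  f i := ModuleCat.ofHom (filtrationDiagonal fun n => lowSubmodule M n i)
  comm' _ _ _ := rfl

/-- `idSubTransition` for the filtration of `M` by `lowSubmodule`. -/
def piTruncationIdSubTransition : piComplex (truncation M) ⟶ piComplex (truncation M) where
  f i := ModuleCat.ofHom (idSubTransition (antitone_lowSubmodule M i))
  comm' i j _ := ModuleCat.hom_ext (LinearMap.ext fun y : ∀ n, M.X i ⧸ lowSubmodule M n i => by
    choose x hx using fun n => Submodule.Quotient.mk_surjective _ (y n)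
    obtain rfl : (fun n => Submodule.Quotient.mk (x n)) = y := funext hx
    exact funext fun n => congrArg Submodule.Quotient.mk (map_sub (M.d i j).hom _ _))

lemma shortExact_toPiTruncation :
    ∃ w, (ShortComplex.mk (toPiTruncation M) (piTruncationIdSubTransition M) w).ShortExact := by
  have hbot (i : ℤ) : lowSubmodule M (i.natAbs + 1) i = ⊥ := lowSubmodule_eq_bot M (by lia)
  have exact (i : ℤ) :=
    exact_filtrationDiagonal_idSubTransition (antitone_lowSubmodule M i) (hbot i)
  have w : toPiTruncation M ≫ piTruncationIdSubTransition M = 0 := by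
    ext i x
    exact (exact i).apply_apply_eq_zero x
  exact ⟨w, shortExact_of_exact_apply exact (fun i => injective_filtrationDiagonal (hbot i))
    fun i => surjective_idSubTransition (antitone_lowSubmodule M i)⟩

end Truncation

section InjectiveResolution

variable {R : Type u} [CommRing R]

lemma exists_shortExact_acyclic_isKInjective (X : ModuleComplex R) (d : ℤ) [X.IsStrictlyGE d] :
    ∃ (J A : ModuleComplex R) (i : X ⟶ J) (p : J ⟶ A) (w : i ≫ p = 0),
      (ShortComplex.mk i p w).ShortExact ∧ A.Acyclic ∧ J.IsKInjective ∧
        ∀ n, Injective (J.X n) := by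
  obtain ⟨J, i, _, hi, hJ, _⟩ :=
    CochainComplex.Plus.modelCategoryQuillen.exists_mono_quasiIso_injective X (d - 1) d
  have hT : (ShortComplex.mk i (cokernel.π i) (cokernel.condition i)).ShortExact :=
    { exact := ShortComplex.exact_cokernel i
      mono_f := inferInstance
      epi_g := inferInstance }
  exact ⟨J, _, i, _, _, hT, hT.acyclic_X₃ hi, isKInjective_of_injective J (d - 1), hJ⟩

lemma IsThick.of_forall_isKInjective {P : ObjectProperty (ModuleComplex R)} (hP : IsThick P)
    (h : ∀ J : ModuleComplex R, J.IsKInjective → (∀ n, Injective (J.X n)) → P J)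
    (M : ModuleComplex R) : P M := by
  choose J A i p w hT hA hJ hinj using fun n : ℕ =>
    exists_shortExact_acyclic_isKInjective (truncation M n) (-n)
  obtain ⟨_, hres⟩ := shortExact_piComplex hT
  have htrunc : P (piComplex (truncation M)) :=
    hP.X₁ hres (h _ (isKInjective_piComplex hJ) fun k =>
        have (n : ℕ) := hinj n k
        injective_piComplex_X)
      (hP.of_acyclic (acyclic_piComplex hA))
  obtain ⟨_, hM⟩ := shortExact_toPiTruncation M
  exact hP.X₁ hM htrunc htrunc

end InjectiveResolution

section Main

lemma isAdicComplete_of_linearEquiv {R M N : Type*} [CommRing R] [AddCommGroup M] [Module R M]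
    [AddCommGroup N] [Module R N] {I : Ideal R} [IsAdicComplete I M] (e : M ≃ₗ[R] N) :
    IsAdicComplete I N := by
  rw [← AdicCompletion.of_bijective_iff]
  have : (AdicCompletion.of I N : N → _) =
      AdicCompletion.congr I e ∘ AdicCompletion.of I M ∘ e.symm := by
    funext x
    change _ = AdicCompletion.map I _ (AdicCompletion.of I M (e.symm x))
    rw [AdicCompletion.map_of]
    simp
  rw [this]
  exact (AdicCompletion.congr I e).bijective.comp
    ((AdicCompletion.of_bijective_iff.2 ‹_›).comp e.symm.bijective)

variable {R S : Type u} [CommRing R] [CommRing S] {f : R →+* S} {ϖ : R}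

lemma isAdicComplete_baseRingComplex_X (I : Ideal R) [IsAdicComplete I R] (i : ℤ) :
    IsAdicComplete I ((baseRingComplex R).X i) := by
  rcases linearEquiv_or_subsingleton_baseRingComplex_X (R := R) i with ⟨⟨e⟩⟩ | h
  · exact isAdicComplete_of_linearEquiv e
  · infer_instance

lemma IsThick.derivedCompletion_restrictComplex {P : ObjectProperty (ModuleComplex R)}
    (hP : IsThick P) (hϖ : IsRegular (f ϖ))
    (h : ∀ K, P ((restrictComplex (toAdicCompletion f ϖ)).obj K)) (K : ModuleComplex S) :
    P ((derivedCompletion ϖ).obj ((restrictComplex f).obj K)) := by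
  obtain ⟨T, A, ι, p, w, hT, hA, hreg⟩ := exists_shortExact_acyclic_regular hϖ K
  have hresA : ((restrictComplex f).obj A).Acyclic :=
    fun i => (hA i).map (ModuleCat.restrictScalars f)
  exact (hP.inverseImage_derivedCompletion ϖ).X₃ (hT.map_of_exact (restrictComplex f))
    ((hP.derivedCompletion_restrictComplex_iff hreg).2 (h _))
    ((hP.inverseImage_derivedCompletion ϖ).of_acyclic hresA)

theorem isUniversalDescent_toAdicCompletion [IsAdicComplete (Ideal.span {ϖ}) R]
    (hϖ : IsRegular (f ϖ)) (hf : IsUniversalDescent f) :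
    IsUniversalDescent (toAdicCompletion f ϖ) := by
  refine isUniversalDescent_iff.2 fun P hP hres => hP.of_forall_isKInjective fun J _ hJ => ?_
  have hQ : IsThick fun X => P ((homComplex R J).obj (.op X)) :=
    hP.inverseImage_op (homComplex R J) (fun _ hT => shortExact_map_homComplex R hJ hT)
      fun _ hX => acyclic_homComplex_obj R hX
  have hQres (K) :
      P ((homComplex R J).obj (.op ((restrictComplex (toAdicCompletion f ϖ)).obj K))) := by
    obtain ⟨L, ⟨e⟩⟩ := exists_restrictComplex_obj_iso_homComplex (toAdicCompletion f ϖ) J K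
    exact hP.of_retract (.ofIso e.symm) (hres L)
  have hQcompl : P ((homComplex R J).obj (.op ((derivedCompletion ϖ).obj (baseRingComplex R)))) :=
    isUniversalDescent_iff.1 hf _ (hQ.inverseImage_derivedCompletion ϖ)
      (hQ.derivedCompletion_restrictComplex hϖ hQres) _
  have hQbase : P ((homComplex R J).obj (.op (baseRingComplex R))) :=
    (hQ.derivedCompletion_iff_of_isAdicComplete (isAdicComplete_baseRingComplex_X _)).1 hQcompl
  exact hP.of_retract (.ofIso (homComplexBaseRingIso J)) hQbase

end Main

theorem stmt17_general {R S : Type u} [CommRing R] [CommRing S] (f : R →+* S) {ϖ : R}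
    [IsAdicComplete (Ideal.span {ϖ}) R] (hϖ : IsRegular (f ϖ)) :
    IsUniversalDescent f ↔
      IsUniversalDescent ((algebraMap S (AdicCompletion (Ideal.span {f ϖ}) S)).comp f) :=
  ⟨isUniversalDescent_toAdicCompletion hϖ, .of_comp⟩

/-- Lemma 6.13(1): let `K` be a complete nonarchimedean field with ring of integers `O_K` and
`π ∈ O_K` a nonzero nonunit. For a map `R → S` of `π`-torsion-free `O_K`-algebras with `R`
`π`-adically complete, `R → S` is a universal descent morphism iff `R → Ŝ` is, where `Ŝ` is
the `π`-adic completion of `S`. -/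
theorem stmt17 {K : Type u} [NontriviallyNormedField K] [IsUltrametricDist K]
    [CompleteSpace K] (π : ringOfIntegers K) (hπ0 : π ≠ 0) (hπu : ¬IsUnit π)
    {R S : Type u} [CommRing R] [CommRing S]
    [Algebra (ringOfIntegers K) R] [Algebra (ringOfIntegers K) S]
    (f : R →ₐ[ringOfIntegers K] S)
    (hRtf : ∀ x : R, algebraMap (ringOfIntegers K) R π * x = 0 → x = 0)
    (hStf : ∀ x : S, algebraMap (ringOfIntegers K) S π * x = 0 → x = 0)
    (hRc : IsAdicComplete (Ideal.span {algebraMap (ringOfIntegers K) R π}) R) :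
    IsUniversalDescent f.toRingHom ↔
      IsUniversalDescent
        ((algebraMap S
            (AdicCompletion (Ideal.span {algebraMap (ringOfIntegers K) S π}) S)).comp
          f.toRingHom) := by
  rw [← f.commutes π] at hStf ⊢
  exact stmt17_general f.toRingHom
    (isLeftRegular_iff_isRegular.1 (isLeftRegular_iff_right_eq_zero_of_mul.2 hStf))
end
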